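/- arXiv:0905.4879 — 5 statements merged into one kernel-verified Lean document; each statement's English description precedes it below -/
import Mathlib

section
/- Let G be a weighted marked graph over R, and let G' be the weighted marked graph obtained from G by removing every loop (i.e., setting every diagonal entry of 𝒜(G) to 0) and interchanging the weights α(v) and β(v) at every looped vertex v of G, leaving marks, free loops and all other data unchanged. Then [G] = [G']. -/
/-! Let `L` be the set of looped vertices of `G`. Toggling the diagonal of `𝒜(G)` at `T` gives the
same matrix as toggling the diagonal of the loopless `𝒜(G')` at the symmetric difference `T ∆ L`
(`WMG.adjT_eq_adjT_symmDiff`). As the marks agree, the two nullities agree, and since the weights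
are interchanged exactly on `L`, the weight product of `T` in `G` is that of `T ∆ L` in `G'`.
Reindexing the state sum along the involution `T ↦ T ∆ L` gives `[G] = [G']`. -/

/-- A weighted marked graph over `R` with vertex type `V`: a symmetric adjacency
matrix over `GF(2)` (diagonal entries record loops), a finite set of marked
vertices, weight functions `alpha` and `beta`, and a number `phi` of free loops. -/
structure WMG (R : Type*) (V : Type*) where
  adj : Matrix V V (ZMod 2)
  symm : adj.IsSymm
  marked : Finset V
  alpha : V → R
  beta : V → R
  phi : ℕ

namespace WMG

variable {R : Type*} {V : Type*}

/-- The matrix `𝒜(G)` with the diagonal entries at vertices of `T` toggled. -/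
def adjT [DecidableEq V] (G : WMG R V) (T : Finset V) : Matrix V V (ZMod 2) :=
  Matrix.of fun i j => G.adj i j + if i = j ∧ i ∈ T then 1 else 0

/-- The vertices whose rows and columns survive in `𝒜(G)_T`: all vertices except
marked ones whose toggled diagonal entry is `0`. -/
def keep [Fintype V] [DecidableEq V] (G : WMG R V) (T : Finset V) : Finset V :=
  Finset.univ.filter fun x => ¬(x ∈ G.marked ∧ G.adjT T x x = 0)

/-- The `GF(2)`-nullity of `𝒜(G)_T` (number of columns minus rank). -/
noncomputable def nullity [Fintype V] [DecidableEq V] (G : WMG R V) (T : Finset V) : ℕ :=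
  Fintype.card {x // x ∈ G.keep T} -
    ((G.adjT T).submatrix (fun i : {x // x ∈ G.keep T} => i.1)
      (fun j : {x // x ∈ G.keep T} => j.1)).rank

/-- The weighted marked-graph bracket polynomial
`[G] = d^φ · Σ_T (∏_{v ∉ T} α v) (∏_{t ∈ T} β t) d^{ν(𝒜(G)_T)}`. -/
noncomputable def bracket [CommRing R] [Fintype V] [DecidableEq V]
    (G : WMG R V) (d : Rˣ) : R :=
  (d : R) ^ G.phi *
    ∑ T : Finset V,
      (∏ x ∈ Tᶜ, G.alpha x) * (∏ t ∈ T, G.beta t) * (d : R) ^ G.nullity T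

/-- Deletion of a set `S` of vertices (with all incident edges); all other data
unchanged. -/
def delete [DecidableEq V] (G : WMG R V) (S : Finset V) : WMG R {x : V // x ∉ S} where
  adj := G.adj.submatrix Subtype.val Subtype.val
  symm := G.symm.submatrix Subtype.val
  marked := G.marked.subtype fun x => x ∉ S
  alpha := fun x => G.alpha x.1
  beta := fun x => G.beta x.1
  phi := G.phi

/-- Change the weights of the vertex `a` to `x` and `y`. -/
def reweight [DecidableEq V] (G : WMG R V) (a : V) (x y : R) : WMG R V :=
  { G with alpha := Function.update G.alpha a x, beta := Function.update G.beta a y }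

/-- Mark the vertex `a` and change its weights to `x` and `y`. -/
def markReweight [DecidableEq V] (G : WMG R V) (a : V) (x y : R) : WMG R V :=
  { G with marked := insert a G.marked,
           alpha := Function.update G.alpha a x,
           beta := Function.update G.beta a y }

/-- The composition `F ∗ H` of two weighted marked graphs along the vertices
`aF` and `aH` (thought of as a single shared vertex `a`): the vertex set is the
disjoint union of `V(F) \ {a}` and `V(H) \ {a}`; loops, marks and weights are
inherited; two vertices are adjacent iff they are adjacent in `F`, or in `H`,
or one is a neighbor of `a` in `F` and the other is a neighbor of `a` in `H`;
free loops add. -/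
def comp {VF VH : Type*} [DecidableEq VF] [DecidableEq VH]
    (F : WMG R VF) (H : WMG R VH) (aF : VF) (aH : VH) :
    WMG R ({x : VF // x ≠ aF} ⊕ {y : VH // y ≠ aH}) where
  adj := Matrix.of fun p q =>
    match p, q with
    | Sum.inl x, Sum.inl x' => F.adj x.1 x'.1
    | Sum.inl x, Sum.inr y => F.adj x.1 aF * H.adj aH y.1
    | Sum.inr y, Sum.inl x => F.adj x.1 aF * H.adj aH y.1
    | Sum.inr y, Sum.inr y' => H.adj y.1 y'.1
  symm := by
    refine Matrix.ext fun p q => ?_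
    rcases p with x | y <;> rcases q with x' | y'
    · exact F.symm.apply x.1 x'.1
    · rfl
    · rfl
    · exact H.symm.apply y.1 y'.1
  marked := (F.marked.subtype fun x => x ≠ aF).disjSum (H.marked.subtype fun y => y ≠ aH)
  alpha := Sum.elim (fun x => F.alpha x.1) (fun y => H.alpha y.1)
  beta := Sum.elim (fun x => F.beta x.1) (fun y => H.beta y.1)
  phi := F.phi + H.phi

/-- The universal property of Theorem `pjoin` for `F` and `a`, with candidate
weights `A = α'(a)`, `B = β'(a)`, `Am = α'(a_m)`: for every weighted marked
graph `H` sharing exactly the unlooped unmarked vertex `a` with `F`, in which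
no neighbor of `a` is marked, `[F ∗ H] = [H'] + [H'_m]`. -/
def UnivProp {R : Type*} [CommRing R] {VF : Type u_v} [Fintype VF] [DecidableEq VF]
    (d : Rˣ) (F : WMG R VF) (a : VF) (A B Am : R) : Prop :=
  ∀ (VH : Type u_v) [Fintype VH] [DecidableEq VH] (H : WMG R VH) (aH : VH),
    H.adj aH aH = 0 → aH ∉ H.marked →
    (∀ y : VH, H.adj aH y = 1 → y ∉ H.marked) →
    (F.comp H a aH).bracket d =
      (H.reweight aH A B).bracket d + (H.markReweight aH Am 0).bracket d

/-- The local complement `G^v`: toggle all entries of the adjacency matrix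
(including diagonal ones) between members of the open neighborhood of `v`. -/
def localComp [DecidableEq V] (G : WMG R V) (v : V) : WMG R V where
  adj := Matrix.of fun a b =>
    G.adj a b + if (a ≠ v ∧ G.adj v a = 1) ∧ (b ≠ v ∧ G.adj v b = 1) then 1 else 0
  symm := by
    refine Matrix.ext fun a b => ?_
    have h : ((b ≠ v ∧ G.adj v b = 1) ∧ (a ≠ v ∧ G.adj v a = 1)) ↔
        ((a ≠ v ∧ G.adj v a = 1) ∧ (b ≠ v ∧ G.adj v b = 1)) := and_comm
    simp only [Matrix.transpose_apply, Matrix.of_apply]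
    rw [G.symm.apply a b, if_congr h rfl rfl]
  marked := G.marked
  alpha := G.alpha
  beta := G.beta
  phi := G.phi

/-- The condition for the pivot `G^{vw}` to toggle the adjacency between `a`
and `b`: `a` and `b` are distinct and (in one order or the other) `a ∈ N(v)`,
`b ∈ N(w)`, and `a ∉ N(w)` or `b ∉ N(v)`. -/
def pivCond [DecidableEq V] (G : WMG R V) (v w a b : V) : Prop :=
  a ≠ b ∧
    (((a ≠ v ∧ G.adj v a = 1) ∧ (b ≠ w ∧ G.adj w b = 1) ∧
        (¬(a ≠ w ∧ G.adj w a = 1) ∨ ¬(b ≠ v ∧ G.adj v b = 1))) ∨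
     ((b ≠ v ∧ G.adj v b = 1) ∧ (a ≠ w ∧ G.adj w a = 1) ∧
        (¬(b ≠ w ∧ G.adj w b = 1) ∨ ¬(a ≠ v ∧ G.adj v a = 1))))

instance pivCond_decidable [DecidableEq V] (G : WMG R V) (v w a b : V) :
    Decidable (pivCond G v w a b) := by
  unfold pivCond; infer_instance

lemma pivCond_comm [DecidableEq V] (G : WMG R V) (v w a b : V) :
    pivCond G v w a b ↔ pivCond G v w b a := by
  unfold pivCond
  constructor <;> rintro ⟨h1, h2⟩ <;> exact ⟨Ne.symm h1, h2.symm⟩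

/-- The pivot `G^{vw}`. -/
def pivot [DecidableEq V] (G : WMG R V) (v w : V) : WMG R V where
  adj := Matrix.of fun a b => G.adj a b + if pivCond G v w a b then 1 else 0
  symm := by
    refine Matrix.ext fun a b => ?_
    simp only [Matrix.transpose_apply, Matrix.of_apply]
    rw [G.symm.apply a b, if_congr (pivCond_comm G v w b a) rfl rfl]
  marked := G.marked
  alpha := G.alpha
  beta := G.beta
  phi := G.phi

/-- The marked pivot `G_c^{vw}`: perform the pivot `G^{vw}`, then interchange
the neighborhoods of `v` and `w` (leaving loops unchanged) and toggle the
marks on `v` and `w`. -/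
def markedPivot [DecidableEq V] (G : WMG R V) (v w : V) : WMG R V where
  adj := Matrix.of fun a b =>
    if a = b then (G.pivot v w).adj a b
    else (G.pivot v w).adj (Equiv.swap v w a) (Equiv.swap v w b)
  symm := by
    refine Matrix.ext fun a b => ?_
    simp only [Matrix.transpose_apply, Matrix.of_apply]
    by_cases h : a = b
    · subst h; simp
    · rw [if_neg fun hh => h hh.symm, if_neg h]
      exact (G.pivot v w).symm.apply _ _
  marked := (G.marked \ {v, w}) ∪ (({v, w} : Finset V) \ G.marked)
  alpha := G.alpha
  beta := G.beta
  phi := G.phi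

/-- The bordered version of `𝒜(F − a)_T`: adjoin the row and column recording
adjacency to `a` in `F`, with corner entry `c`; `borderedNullity` is its
`GF(2)`-nullity. -/
noncomputable def borderedNullity {VF : Type*} [Fintype VF] [DecidableEq VF]
    (F : WMG R VF) (a : VF) (T : Finset {x : VF // x ∉ ({a} : Finset VF)})
    (c : ZMod 2) : ℕ :=
  Fintype.card (Option {x // x ∈ (F.delete {a}).keep T}) -
    (Matrix.of (fun p q =>
      match p, q with
      | some i, some j => (F.delete {a}).adjT T i.1 j.1
      | some i, none => F.adj i.1.1 a
      | none, some j => F.adj j.1.1 a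
      | none, none => c) :
      Matrix (Option {x // x ∈ (F.delete {a}).keep T})
        (Option {x // x ∈ (F.delete {a}).keep T}) (ZMod 2)).rank

end WMG

open scoped symmDiff

namespace WMG

variable {R : Type*} {V : Type*}

lemma nullity_congr [Fintype V] [DecidableEq V] {G G' : WMG R V} {T T' : Finset V}
    (hmarked : G'.marked = G.marked) (hA : G.adjT T = G'.adjT T') :
    G.nullity T = G'.nullity T' := by
  have hk : G.keep T = G'.keep T' := by
    unfold keep
    rw [hmarked, hA]
  unfold nullity
  rw [hA, hk]

lemma adjT_eq_adjT_symmDiff [DecidableEq V] {G G' : WMG R V} {L : Finset V}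
    (hL : ∀ x, x ∈ L ↔ G.adj x x = 1)
    (hadj : ∀ i j : V, i ≠ j → G'.adj i j = G.adj i j)
    (hdiag : ∀ i : V, G'.adj i i = 0) (T : Finset V) :
    G.adjT T = G'.adjT (T ∆ L) := by
  ext i j
  by_cases hij : i = j
  · subst hij
    simp only [adjT, Matrix.of_apply, true_and, Finset.mem_symmDiff, hL, hdiag]
    generalize G.adj i i = a
    by_cases hT : i ∈ T <;> simp only [hT, if_true, if_false, true_and, false_and, not_true,
      not_false_iff, and_true, and_false, or_false, false_or] <;> revert a <;> decide
  · simp [adjT, hij, hadj i j hij]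

lemma weight_eq_prod_ite [CommRing R] [Fintype V] [DecidableEq V] (α β : V → R) (T : Finset V) :
    (∏ x ∈ Tᶜ, α x) * ∏ x ∈ T, β x = ∏ x, if x ∈ T then β x else α x := by
  rw [← Finset.prod_compl_mul_prod T]
  congr 1
  · exact Finset.prod_congr rfl fun x hx => by rw [if_neg (Finset.mem_compl.1 hx)]
  · exact Finset.prod_congr rfl fun x hx => by rw [if_pos hx]

end WMG

theorem loop_removal {R : Type*} [CommRing R] (d : Rˣ) {V : Type*} [Fintype V] [DecidableEq V]
    (G G' : WMG R V)
    (hadj : ∀ i j : V, i ≠ j → G'.adj i j = G.adj i j)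
    (hdiag : ∀ i : V, G'.adj i i = 0)
    (hmarked : G'.marked = G.marked)
    (hphi : G'.phi = G.phi)
    (halpha : ∀ x : V, G'.alpha x = if G.adj x x = 1 then G.beta x else G.alpha x)
    (hbeta : ∀ x : V, G'.beta x = if G.adj x x = 1 then G.alpha x else G.beta x) :
    G.bracket d = G'.bracket d := by
  obtain ⟨L, hL⟩ : ∃ L : Finset V, ∀ x, x ∈ L ↔ G.adj x x = 1 :=
    ⟨Finset.univ.filter fun x => G.adj x x = 1, by simp⟩
  unfold WMG.bracket
  rw [hphi]
  congr 1
  refine Fintype.sum_equiv (symmDiff_left_involutive L).toPerm _ _ fun T => ?_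
  change _ = _ * (d : R) ^ G'.nullity (T ∆ L)
  rw [WMG.nullity_congr hmarked (WMG.adjT_eq_adjT_symmDiff hL hadj hdiag T)]
  congr 1
  change _ = (∏ x ∈ (T ∆ L)ᶜ, G'.alpha x) * ∏ x ∈ T ∆ L, G'.beta x
  rw [WMG.weight_eq_prod_ite, WMG.weight_eq_prod_ite]
  refine Finset.prod_congr rfl fun x _ => ?_
  rw [halpha, hbeta]
  by_cases hT : x ∈ T <;> by_cases hx : G.adj x x = 1 <;> simp [Finset.mem_symmDiff, hL, hT, hx]
end

section
/- Let G be a weighted marked graph over R and suppose v₁, ..., v_k are unlooped twins in G that form a clique, i.e., they are pairwise adjacent and all have the same neighbors outside {v₁, ..., v_k}. Let ρ be the number of indices i such that v_i is not marked. Let (G − v₂ − ... − v_k)' be the weighted marked graph obtained from G − v₂ − ... − v_k by (i) declaring v₁ marked if and only if ρ is even, and (ii) changing the weights of v₁ to α'(v₁) = ∏_{i=1}^{k} α(v_i) and β'(v₁) = d^{−1}·(−α'(v₁) + ∏_{i=1}^{k} (α(v_i) + d·β(v_i))). Then [G] = [(G − v₂ − ... − v_k)']. -/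
namespace TwinReduction

open Finset

/-! ### Nullity as the dimension of a solution space -/

/-- The kernel of the principal submatrix of `M` on the complement of `D`, realised as the
space of vectors on the whole index set that vanish on `D` and satisfy the remaining equations. -/
def restrictedKer {W : Type*} [Fintype W] (M : Matrix W W (ZMod 2)) (D : W → Prop) :
    Submodule (ZMod 2) (W → ZMod 2) where
  carrier := {x | ∀ p, (D p → x p = 0) ∧ (¬ D p → (M.mulVec x) p = 0)}
  zero_mem' := by intro p; simp
  add_mem' := by
    intro x y hx hy p
    refine ⟨fun h => ?_, fun h => ?_⟩
    · simp [(hx p).1 h, (hy p).1 h]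
    · simp [Matrix.mulVec_add, (hx p).2 h, (hy p).2 h]
  smul_mem' := by
    intro a x hx p
    refine ⟨fun h => ?_, fun h => ?_⟩
    · simp [(hx p).1 h]
    · simp [Matrix.mulVec_smul, (hx p).2 h]

lemma mem_restrictedKer {W : Type*} [Fintype W] {M : Matrix W W (ZMod 2)} {D : W → Prop}
    {x : W → ZMod 2} : x ∈ restrictedKer M D ↔
      ∀ p, (D p → x p = 0) ∧ (¬ D p → (M.mulVec x) p = 0) := Iff.rfl

lemma sum_subtype_of_vanish {W : Type*} [Fintype W] (P : W → Prop) [DecidablePred P]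
    [Fintype {w // P w}] (f : W → ZMod 2) (hf : ∀ w, ¬ P w → f w = 0) :
    ∑ w, f w = ∑ w : {w // P w}, f w.1 := by
  rw [← Finset.sum_subtype (univ.filter P) (by simp) f]
  exact (Finset.sum_subset (Finset.subset_univ _) (by
    intro w _ hw; exact hf w (by simpa using hw))).symm

/-- Restriction to the kept vertices identifies `restrictedKer` with the kernel of the
submatrix defining the nullity. -/
lemma nullity_eq_finrank {R V : Type*} [Fintype V] [DecidableEq V] (G : WMG R V) (T : Finset V) :
    G.nullity T = Module.finrank (ZMod 2)
      (restrictedKer (G.adjT T) fun x => x ∈ G.marked ∧ G.adjT T x x = 0) := by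
  unfold WMG.nullity
  set B := (G.adjT T).submatrix (fun i : {x // x ∈ G.keep T} => i.1)
      (fun j : {x // x ∈ G.keep T} => j.1) with hB
  have hk : ∀ v, v ∈ G.keep T ↔ ¬ (v ∈ G.marked ∧ G.adjT T v v = 0) := by
    intro v; simp [WMG.keep]
  have h1 := LinearMap.finrank_range_add_finrank_ker B.mulVecLin
  have h2 : B.rank = Module.finrank (ZMod 2) (LinearMap.range B.mulVecLin) := rfl
  rw [Module.finrank_fintype_fun_eq_card, ← h2] at h1
  rw [← h1, Nat.add_sub_cancel_left]
  have hx0 : ∀ x ∈ restrictedKer (G.adjT T) (fun x => x ∈ G.marked ∧ G.adjT T x x = 0),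
      ∀ w, ¬ w ∈ G.keep T → x w = 0 := by
    intro x hx w hw
    exact (hx w).1 (by simpa [hk] using hw)
  refine (LinearEquiv.finrank_eq (LinearEquiv.ofBijective
    (((LinearMap.funLeft (ZMod 2) (ZMod 2) (fun i : {x // x ∈ G.keep T} => i.1)).domRestrict
      (restrictedKer (G.adjT T) fun x => x ∈ G.marked ∧ G.adjT T x x = 0)).codRestrict
      (LinearMap.ker B.mulVecLin) ?_) ⟨?_, ?_⟩)).symm
  · rintro ⟨x, hx⟩
    rw [LinearMap.mem_ker]
    funext i
    have h := (hx i.1).2 ((hk _).1 i.2)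
    rw [Matrix.mulVec, dotProduct, sum_subtype_of_vanish (fun w => w ∈ G.keep T)] at h
    · exact h
    · intro w hw; simp [hx0 x hx w hw]
  · rintro ⟨x, hx⟩ ⟨y, hy⟩ h
    ext w
    by_cases hw : w ∈ G.keep T
    · exact congrFun (congrArg Subtype.val h) ⟨w, hw⟩
    · simp [hx0 x hx w hw, hx0 y hy w hw]
  · rintro ⟨y, hy⟩
    rw [LinearMap.mem_ker] at hy
    refine ⟨⟨fun w => if h : w ∈ G.keep T then y ⟨w, h⟩ else 0, fun w => ⟨fun h => ?_, fun h => ?_⟩⟩, ?_⟩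
    · have : w ∉ G.keep T := by rw [hk]; simpa using h
      simp [this]
    · have h3 : B.mulVec y ⟨w, (hk w).2 h⟩ = 0 := congrFun hy ⟨w, (hk w).2 h⟩
      rw [Matrix.mulVec, dotProduct] at h3
      rw [Matrix.mulVec, dotProduct, sum_subtype_of_vanish (fun w => w ∈ G.keep T)]
      · refine Eq.trans (Finset.sum_congr rfl fun i _ => ?_) h3
        simp [hB]
      · intro w hw; simp [hw]
    · ext i
      simp [LinearMap.funLeft]

lemma finrank_restrictedKer_reindex {W W' : Type*} [Fintype W] [Fintype W'] (e : W ≃ W')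
    (M : Matrix W' W' (ZMod 2)) (D : W' → Prop) :
    Module.finrank (ZMod 2) (restrictedKer (M.submatrix e e) (D ∘ e)) =
      Module.finrank (ZMod 2) (restrictedKer M D) := by
  have h : (restrictedKer M D).map
      (LinearEquiv.funCongrLeft (ZMod 2) (ZMod 2) e).toLinearMap =
        restrictedKer (M.submatrix e e) (D ∘ e) := by
    ext x
    rw [Submodule.mem_map_equiv]
    simp only [mem_restrictedKer]
    rw [← e.forall_congr_right]
    refine forall_congr' fun p => ?_
    have : (M.submatrix e e).mulVec x p =
        M.mulVec ((LinearEquiv.funCongrLeft (ZMod 2) (ZMod 2) e).symm x) (e p) := by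
      simp only [Matrix.mulVec, dotProduct]
      rw [← e.sum_comp]
      simp [LinearEquiv.funCongrLeft, LinearMap.funLeft]
    rw [this]
    simp [LinearEquiv.funCongrLeft, LinearMap.funLeft]
  rw [← h]
  exact LinearEquiv.finrank_map_eq _ _

/-- Collapsing the twins `I` to a single vertex by adding up their coordinates. -/
def collapse (I J : Type*) [Fintype I] : (I ⊕ J → ZMod 2) →ₗ[ZMod 2] (Unit ⊕ J → ZMod 2) where
  toFun x := Sum.elim (fun _ => ∑ i, x (.inl i)) (fun j => x (.inr j))
  map_add' x y := by
    ext p; rcases p with p | p <;> simp [sum_add_distrib]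
  map_smul' a x := by
    ext p; rcases p with p | p <;> simp [mul_sum]

@[simp] lemma collapse_inl {I J : Type*} [Fintype I] (x : I ⊕ J → ZMod 2) (u : Unit) :
    collapse I J x (.inl u) = ∑ i, x (.inl i) := rfl

@[simp] lemma collapse_inr {I J : Type*} [Fintype I] (x : I ⊕ J → ZMod 2) (j : J) :
    collapse I J x (.inr j) = x (.inr j) := rfl

section Key

variable {I J : Type*} [Fintype I] [Fintype J] [DecidableEq I]

/-- The adjacency matrix of a clique `I` of twins with the vertices in `A` looped; the twins
have adjacency vector `c` to the remaining vertices `J`, which carry the matrix `Q`. -/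
def cliqueMat (c : J → ZMod 2) (Q : J → J → ZMod 2) (A : Finset I) :
    Matrix (I ⊕ J) (I ⊕ J) (ZMod 2) :=
  Matrix.of fun p q => match p, q with
    | .inl i, .inl i' => if i = i' ∧ i ∉ A then 0 else 1
    | .inl _, .inr j => c j
    | .inr j, .inl _ => c j
    | .inr j, .inr j' => Q j j'

/-- The equations at the twins involve the outside vertices only through
`∑ j, c j * x (inr j)`, and those at the outside vertices involve the twins only through the
coordinate sum `∑ i, x (inl i)`. -/
lemma mem_cliqueKer (c : J → ZMod 2) (Q : J → J → ZMod 2) (A : Finset I)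
    (m : I → Prop) (D : J → Prop) (x : I ⊕ J → ZMod 2) :
    x ∈ restrictedKer (cliqueMat c Q A) (Sum.elim (fun i => m i ∧ i ∉ A) D) ↔
      (∀ i, (m i ∧ i ∉ A → x (.inl i) = 0) ∧ (¬ (m i ∧ i ∉ A) →
        ∑ i, x (.inl i) + (if i ∈ A then 0 else x (.inl i)) + ∑ j, c j * x (.inr j) = 0)) ∧
      (∀ j, (D j → x (.inr j) = 0) ∧ (¬ D j →
        c j * ∑ i, x (.inl i) + ∑ j', Q j j' * x (.inr j') = 0)) := by
  rw [mem_restrictedKer, Sum.forall]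
  have h1 : ∀ i, (cliqueMat c Q A).mulVec x (.inl i) =
      ∑ i, x (.inl i) + (if i ∈ A then 0 else x (.inl i)) + ∑ j, c j * x (.inr j) := by
    intro i
    simp only [Matrix.mulVec, dotProduct, Fintype.sum_sum_type, cliqueMat, Matrix.of_apply]
    congr 1
    by_cases hA : i ∈ A
    · simp [hA]
    · rw [if_neg hA]
      have : ∀ i', (if i = i' ∧ i ∉ A then (0 : ZMod 2) else 1) * x (.inl i') =
          x (.inl i') + if i = i' then x (.inl i') else 0 := by
        intro i'
        by_cases h : i = i'
        · subst h
          simp [hA, CharTwo.add_self_eq_zero]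
        · simp [h]
      simp only [this, sum_add_distrib, sum_ite_eq, mem_univ, if_true]
  have h2 : ∀ j, (cliqueMat c Q A).mulVec x (.inr j) =
      c j * ∑ i, x (.inl i) + ∑ j', Q j j' * x (.inr j') := by
    intro j
    simp [Matrix.mulVec, dotProduct, Fintype.sum_sum_type, cliqueMat, mul_sum]
  simp only [h1, h2, Sum.elim_inl, Sum.elim_inr]

/-! ### Collapsing a clique of twins -/

open Classical in
/-- If no twin is looped, `collapse` is an isomorphism of solution spaces. With
`s = ∑ i, x (inl i)` and `b = ∑ j, c j * x (inr j)`, every unmarked twin has coordinate `s + b`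
and every marked one has coordinate `0`, so the only constraint left is `s = ρ * (s + b)`, where
`ρ` counts the unmarked twins: it says `s = 0` (a marked vertex) for `ρ` even and `b = 0` (an
unmarked unlooped vertex) for `ρ` odd. -/
lemma finrank_clique_empty (c : J → ZMod 2) (Q : J → J → ZMod 2) (m : I → Prop) (D : J → Prop)
    (m' : Unit → Prop) (hm' : m' () ↔ (univ.filter fun i => ¬ m i).card % 2 = 0) :
    Module.finrank (ZMod 2)
        (restrictedKer (cliqueMat c Q (∅ : Finset I)) (Sum.elim (fun i => m i ∧ i ∉ (∅ : Finset I)) D)) =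
      Module.finrank (ZMod 2)
        (restrictedKer (cliqueMat c Q (∅ : Finset Unit))
          (Sum.elim (fun i => m' i ∧ i ∉ (∅ : Finset Unit)) D)) := by
  have two : (2 : ZMod 2) = 0 := by decide
  -- the number of unmarked twins enters only through its parity
  have scal : ∀ a : ZMod 2, (∑ i : I, if m i then 0 else a) =
      if m' () then 0 else a := by
    intro a
    have : ∀ i, (if m i then (0 : ZMod 2) else a) = if ¬ m i then a else 0 := by
      intro i; by_cases h : m i <;> simp [h]
    rw [sum_congr rfl fun i _ => this i, ← Finset.sum_filter, Finset.sum_const, nsmul_eq_mul]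
    by_cases h : m' ()
    · have : (((univ.filter fun i => ¬ m i).card : ℕ) : ZMod 2) = 0 :=
        (ZMod.natCast_eq_zero_iff _ _).2 (Nat.dvd_of_mod_eq_zero (hm'.1 h))
      simp [this, h]
    · have : (((univ.filter fun i => ¬ m i).card : ℕ) : ZMod 2) = 1 := by
        rw [hm'] at h
        rw [ZMod.natCast_eq_one_iff_odd, Nat.odd_iff]; omega
      simp [this, h]
  have hval : ∀ x : I ⊕ J → ZMod 2,
      (∀ i, (m i → x (.inl i) = 0) ∧ (¬ m i →
        ∑ i, x (.inl i) + x (.inl i) + ∑ j, c j * x (.inr j) = 0)) →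
      ∀ i, x (.inl i) = if m i then 0 else ∑ i, x (.inl i) + ∑ j, c j * x (.inr j) := by
    intro x hx i
    split_ifs with h
    · exact (hx i).1 h
    · have := (hx i).2 h
      linear_combination this + (-(∑ i, x (.inl i)) - ∑ j, c j * x (.inr j)) * two
  refine LinearEquiv.finrank_eq (LinearEquiv.ofBijective
    (((collapse I J).domRestrict _).codRestrict _ ?_) ⟨?_, ?_⟩)
  · rintro ⟨x, hx⟩
    rw [mem_cliqueKer] at hx ⊢
    simp only [LinearMap.domRestrict_apply, collapse_inl, collapse_inr, Finset.notMem_empty,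
      not_false_eq_true, and_true, if_false, univ_unique, sum_singleton] at hx ⊢
    refine ⟨fun _ => ?_, hx.2⟩
    have h := hval x hx.1
    have hs : ∑ i, x (.inl i) = _ := (sum_congr rfl fun i _ => h i).trans (scal _)
    change (m' () → _) ∧ (¬ m' () → _)
    constructor
    · intro h'; rw [hs, if_pos h']
    · intro h'
      rw [if_neg h'] at hs
      linear_combination -hs + (∑ i, x (.inl i)) * two
  · rintro ⟨x, hx⟩ ⟨y, hy⟩ hxy
    have h0 : ∀ p, collapse I J x p = collapse I J y p :=
      fun p => congrFun (congrArg Subtype.val hxy) p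
    have hs := h0 (.inl ())
    have hj : ∀ j, x (.inr j) = y (.inr j) := fun j => h0 (.inr j)
    simp only [collapse_inl] at hs
    rw [mem_cliqueKer] at hx hy
    simp only [Finset.notMem_empty, not_false_eq_true, and_true, if_false] at hx hy
    ext p
    rcases p with i | j
    · change x (.inl i) = y (.inl i)
      rw [hval x hx.1, hval y hy.1, hs]
      simp only [hj]
    · exact hj j
  · rintro ⟨y, hy⟩
    have hy' := hy
    rw [mem_cliqueKer] at hy'
    simp only [Finset.notMem_empty, not_false_eq_true, and_true, if_false, univ_unique,
      sum_singleton] at hy'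
    have h1 : (m' () → y (.inl ()) = 0) ∧ (¬ m' () → y (.inl ()) + y (.inl ()) +
      ∑ j, c j * y (.inr j) = 0) := hy'.1 ()
    set b := ∑ j, c j * y (.inr j) with hb
    have hsum : (∑ i : I, if m i then 0 else y (.inl ()) + b) = y (.inl ()) := by
      rw [scal]
      split_ifs with h
      · exact (h1.1 h).symm
      · have := h1.2 h
        linear_combination this - y (.inl ()) * two
    refine ⟨⟨Sum.elim (fun i => if m i then 0 else y (.inl ()) + b) (fun j => y (.inr j)), ?_⟩, ?_⟩
    · rw [mem_cliqueKer]
      simp only [Sum.elim_inl, Sum.elim_inr, hsum, Finset.notMem_empty, not_false_eq_true, and_true,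
        if_false]
      refine ⟨fun i => ⟨fun h => if_pos h, fun h => ?_⟩, hy'.2⟩
      rw [if_neg h, ← hb]
      linear_combination (y (.inl ()) + b) * two
    · ext p
      rcases p with i | j
      · exact hsum
      · rfl

/-- If the set `A` of looped twins contains some `t`, the unlooped twins have coordinate `0` and
the equations at all looped twins coincide with that of a single looped vertex. A solution is
therefore a solution for the collapsed graph together with free coordinates on `A.erase t`. -/
lemma finrank_clique_nonempty (c : J → ZMod 2) (Q : J → J → ZMod 2) (m : I → Prop) (D : J → Prop)
    (m' : Unit → Prop) (A : Finset I) (hA : A.Nonempty) :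
    Module.finrank (ZMod 2)
        (restrictedKer (cliqueMat c Q A) (Sum.elim (fun i => m i ∧ i ∉ A) D)) + 1 =
      Module.finrank (ZMod 2)
        (restrictedKer (cliqueMat c Q ({()} : Finset Unit))
          (Sum.elim (fun i => m' i ∧ i ∉ ({()} : Finset Unit)) D)) + A.card := by
  obtain ⟨t, ht⟩ := hA
  have two : (2 : ZMod 2) = 0 := by decide
  have key : Module.finrank (ZMod 2)
        (restrictedKer (cliqueMat c Q A) (Sum.elim (fun i => m i ∧ i ∉ A) D)) =
      Module.finrank (ZMod 2)
        ((restrictedKer (cliqueMat c Q ({()} : Finset Unit))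
          (Sum.elim (fun i => m' i ∧ i ∉ ({()} : Finset Unit)) D)) ×
          ({i // i ∈ A.erase t} → ZMod 2)) := by
    have hmem : ∀ x : I ⊕ J → ZMod 2,
        x ∈ restrictedKer (cliqueMat c Q A) (Sum.elim (fun i => m i ∧ i ∉ A) D) ↔
        (∀ i ∉ A, x (.inl i) = 0) ∧ (∑ i, x (.inl i) + ∑ j, c j * x (.inr j) = 0) ∧
        (∀ j, (D j → x (.inr j) = 0) ∧ (¬ D j →
          c j * ∑ i, x (.inl i) + ∑ j', Q j j' * x (.inr j') = 0)) := by
      intro x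
      rw [mem_cliqueKer, ← and_assoc]
      refine and_congr_left fun _ => ⟨fun h => ?_, fun h i => ?_⟩
      · have hb := (h t).2 (by simp [ht])
        simp only [ht, if_true, add_zero] at hb
        refine ⟨fun i hi => ?_, hb⟩
        by_cases hm : m i
        · exact (h i).1 ⟨hm, hi⟩
        · have := (h i).2 (by simp [hm])
          simp only [hi, if_false] at this
          -- subtracting the equation at the looped twin `t` leaves the coordinate at `i`
          linear_combination this - hb
      · refine ⟨fun hi => h.1 i hi.2, fun _ => ?_⟩
        by_cases hi : i ∈ A
        · simp [hi, h.2]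
        · simp [hi, h.1 i hi, h.2]
    have hmem' : ∀ y : Unit ⊕ J → ZMod 2,
        y ∈ restrictedKer (cliqueMat c Q ({()} : Finset Unit))
          (Sum.elim (fun i => m' i ∧ i ∉ ({()} : Finset Unit)) D) ↔
        (y (.inl ()) + ∑ j, c j * y (.inr j) = 0) ∧
        (∀ j, (D j → y (.inr j) = 0) ∧ (¬ D j →
          c j * y (.inl ()) + ∑ j', Q j j' * y (.inr j') = 0)) := by
      intro y
      rw [mem_cliqueKer]
      simp
    have hsplit : ∀ u : I → ZMod 2, (∀ i ∉ A, u i = 0) →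
        ∑ i, u i = u t + ∑ i : {i // i ∈ A.erase t}, u i.1 := by
      intro u hu
      rw [← Finset.sum_subtype (A.erase t) (by simp) u, Finset.add_sum_erase _ _ ht]
      exact (Finset.sum_subset (subset_univ _) fun i _ hi => hu i hi).symm
    refine LinearEquiv.finrank_eq (LinearEquiv.ofBijective
      (LinearMap.prod (((collapse I J).domRestrict _).codRestrict _ ?_)
        ((LinearMap.funLeft (ZMod 2) (ZMod 2)
          (fun i : {i // i ∈ A.erase t} => (Sum.inl i.1 : I ⊕ J))).domRestrict _)) ⟨?_, ?_⟩)
    · rintro ⟨x, hx⟩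
      rw [hmem']
      exact ((hmem x).1 hx).2
    · rintro ⟨x, hx⟩ ⟨y, hy⟩ hxy
      rw [hmem] at hx hy
      have h0 : ∀ p, collapse I J x p = collapse I J y p :=
        fun p => congrFun (congrArg Subtype.val (congrArg Prod.fst hxy)) p
      have h1 : ∀ i : {i // i ∈ A.erase t}, x (.inl i.1) = y (.inl i.1) :=
        fun i => congrFun (congrArg Prod.snd hxy) i
      ext p
      rcases p with i | j
      · change x (.inl i) = y (.inl i)
        by_cases hi : i ∈ A
        · by_cases hit : i = t
          · have hs := h0 (.inl ())
            simp only [collapse_inl] at hs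
            rw [hsplit (fun i => x (.inl i)) hx.1, hsplit (fun i => y (.inl i)) hy.1,
              Finset.sum_congr rfl fun i _ => h1 i] at hs
            rw [hit]
            exact add_right_cancel hs
          · exact h1 ⟨i, mem_erase.2 ⟨hit, hi⟩⟩
        · rw [hx.1 i hi, hy.1 i hi]
      · exact h0 (.inr j)
    · rintro ⟨⟨y, hy⟩, z⟩
      rw [hmem'] at hy
      -- the coordinate at `t` is forced by the prescribed coordinate sum
      let u : I → ZMod 2 := fun i =>
        if h : i ∈ A.erase t then z ⟨i, h⟩ else if i = t then y (.inl ()) - ∑ i, z i else 0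
      have hu0 : ∀ i ∉ A, u i = 0 := by
        intro i hi
        have hit : i ≠ t := fun h => hi (h ▸ ht)
        simp [u, hi, hit]
      have huz : ∀ i : {i // i ∈ A.erase t}, u i.1 = z i := by
        intro i
        exact dif_pos i.2
      have hus : ∑ i, u i = y (.inl ()) := by
        rw [hsplit u hu0, Finset.sum_congr rfl fun i _ => huz i]
        simp [u]
      refine ⟨⟨Sum.elim u (fun j => y (.inr j)), ?_⟩, ?_⟩
      · rw [hmem]
        simp only [Sum.elim_inl, Sum.elim_inr, hus]
        exact ⟨hu0, hy⟩
      · refine Prod.ext (Subtype.ext ?_) ?_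
        · ext p
          rcases p with i | j
          · exact hus
          · rfl
        · ext i
          exact huz i
  have hc := Finset.card_pos.2 ⟨t, ht⟩
  rw [key, Module.finrank_prod, Module.finrank_fintype_fun_eq_card, Fintype.card_coe,
    Finset.card_erase_of_mem ht]
  omega

end Key

/-! ### The bracket polynomial -/

/-- The bracket as an iterated sum over the toggled sets inside the two parts of the vertex
set. -/
lemma bracket_split {R V I J : Type*} [CommRing R] [Fintype V] [DecidableEq V]
    [Fintype I] [DecidableEq I] [Fintype J] [DecidableEq J] (d : Rˣ) (G : WMG R V)
    (e : I ⊕ J ≃ V) (N : Finset I → Finset J → ℕ)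
    (hN : ∀ A B, G.nullity ((A.disjSum B).map e.toEmbedding) = N A B) :
    G.bracket d = (d : R) ^ G.phi * ∑ B : Finset J,
      ((∏ j ∈ Bᶜ, G.alpha (e (.inr j))) * ∏ j ∈ B, G.beta (e (.inr j))) *
      ∑ A : Finset I, (∏ i ∈ Aᶜ, G.alpha (e (.inl i))) * (∏ i ∈ A, G.beta (e (.inl i))) *
        (d : R) ^ N A B := by
  unfold WMG.bracket
  congr 1
  rw [← (e.finsetCongr).sum_comp, ← Finset.sumEquiv.symm.toEquiv.sum_comp, Fintype.sum_prod_type_right]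
  refine sum_congr rfl fun B _ => ?_
  rw [mul_sum]
  refine sum_congr rfl fun A _ => ?_
  have hc : (((A.disjSum B).map e.toEmbedding)ᶜ : Finset V) =
      ((Aᶜ).disjSum (Bᶜ)).map e.toEmbedding := by
    ext v
    obtain ⟨p, rfl⟩ := e.surjective v
    rcases p with i | j <;> simp
  change (∏ x ∈ ((A.disjSum B).map e.toEmbedding)ᶜ, G.alpha x) *
    (∏ x ∈ (A.disjSum B).map e.toEmbedding, G.beta x) *
      (d : R) ^ G.nullity ((A.disjSum B).map e.toEmbedding) = _
  rw [hN, hc]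
  simp only [prod_map, prod_disjSum, Equiv.coe_toEmbedding]
  ring

/-- For a graph whose vertices are an unlooped clique of twins indexed by `I` and outside
vertices indexed by `J`, toggling `A` and `B` gives a matrix of the form `cliqueMat`. -/
lemma nullity_eq_finrank_clique {R V I J : Type*} [Fintype V] [DecidableEq V]
    [Fintype I] [DecidableEq I] [Fintype J] [DecidableEq J] (G : WMG R V)
    (e : I ⊕ J ≃ V) (c : J → ZMod 2) (Q : J → J → ZMod 2) (m : I → Prop) (mJ : J → Prop)
    (h1 : ∀ i i', G.adj (e (.inl i)) (e (.inl i')) = if i = i' then 0 else 1)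
    (h2 : ∀ i j, G.adj (e (.inl i)) (e (.inr j)) = c j)
    (h3 : ∀ j j', G.adj (e (.inr j)) (e (.inr j')) = Q j j')
    (hm : ∀ i, e (.inl i) ∈ G.marked ↔ m i) (hmJ : ∀ j, e (.inr j) ∈ G.marked ↔ mJ j)
    (A : Finset I) (B : Finset J) :
    G.nullity ((A.disjSum B).map e.toEmbedding) = Module.finrank (ZMod 2)
      (restrictedKer (cliqueMat c (fun j j' => Q j j' + if j = j' ∧ j ∈ B then 1 else 0) A)
        (Sum.elim (fun i => m i ∧ i ∉ A)
          (fun j => mJ j ∧ Q j j + (if j = j ∧ j ∈ B then 1 else 0) = 0))) := by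
  have h2' : ∀ i j, G.adj (e (.inr j)) (e (.inl i)) = c j := by
    intro i j; rw [← G.symm.apply]; exact h2 i j
  have hM : (G.adjT ((A.disjSum B).map e.toEmbedding)).submatrix e e =
      cliqueMat c (fun j j' => Q j j' + if j = j' ∧ j ∈ B then 1 else 0) A := by
    ext p q
    rcases p with i | j <;> rcases q with i' | j'
    · by_cases h : i = i' <;> by_cases hA : i ∈ A
      · subst h; simp [WMG.adjT, cliqueMat, h1, hA]
      · subst h; simp [WMG.adjT, cliqueMat, h1, hA]
      · simp [WMG.adjT, cliqueMat, h1, h]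
      · simp [WMG.adjT, cliqueMat, h1, h]
    · simp [WMG.adjT, cliqueMat, h2]
    · simp [WMG.adjT, cliqueMat, h2']
    · simp [WMG.adjT, cliqueMat, h3]
  have hD : (fun x => x ∈ G.marked ∧ G.adjT ((A.disjSum B).map e.toEmbedding) x x = 0) ∘ e =
      Sum.elim (fun i => m i ∧ i ∉ A)
        (fun j => mJ j ∧ Q j j + (if j = j ∧ j ∈ B then 1 else 0) = 0) := by
    funext p
    rcases p with i | j
    · simp [WMG.adjT, h1, hm]
    · simp [WMG.adjT, h3, hmJ]
  rw [nullity_eq_finrank, ← finrank_restrictedKer_reindex e, hM, hD]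

/-- The weighted sum over subsets `A` of the clique, when the nullity is `ν₀` for `A = ∅` and
`ν₁ + #A - 1` otherwise. -/
lemma clique_sum {R I : Type*} [CommRing R] [Fintype I] [DecidableEq I] (d : Rˣ) (a b : I → R)
    (N : Finset I → ℕ) (ν₀ ν₁ : ℕ) (h0 : N ∅ = ν₀)
    (h1 : ∀ A, A.Nonempty → N A + 1 = ν₁ + A.card) :
    ∑ A : Finset I, (∏ i ∈ Aᶜ, a i) * (∏ i ∈ A, b i) * (d : R) ^ N A =
      (∏ i, a i) * (d : R) ^ ν₀ +
        ((↑d⁻¹ : R) * (-(∏ i, a i) + ∏ i, (a i + (d : R) * b i))) * (d : R) ^ ν₁ := by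
  have hprod : ∏ i, (a i + (d : R) * b i) =
      ∑ A : Finset I, (∏ i ∈ Aᶜ, a i) * ∏ i ∈ A, ((d : R) * b i) := by
    rw [prod_congr rfl fun i _ => add_comm (a i) _, Fintype.prod_add]
    exact sum_congr rfl fun A _ => mul_comm _ _
  rw [hprod, ← Finset.add_sum_erase univ _ (mem_univ (∅ : Finset I)),
    ← Finset.add_sum_erase univ (fun A => (∏ i ∈ Aᶜ, a i) * ∏ i ∈ A, ((d : R) * b i))
      (mem_univ (∅ : Finset I))]
  simp only [compl_empty, prod_empty, mul_one, h0, neg_add_cancel_left]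
  congr 1
  rw [mul_sum, sum_mul]
  refine sum_congr rfl fun A hA => ?_
  have hN : (d : R) ^ N A * d = (d : R) ^ ν₁ * (d : R) ^ A.card := by
    rw [← pow_succ, ← pow_add, h1 A (nonempty_iff_ne_empty.2 (ne_of_mem_erase hA))]
  rw [prod_mul_distrib, prod_const]
  have hd : (↑d⁻¹ : R) * d = 1 := d.inv_mul
  linear_combination (∏ i ∈ Aᶜ, a i) * (∏ i ∈ A, b i) * (↑d⁻¹ : R) * hN -
    (∏ i ∈ Aᶜ, a i) * (∏ i ∈ A, b i) * (d : R) ^ N A * hd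

end TwinReduction

theorem clique_twin_reduction {R : Type*} [CommRing R] (d : Rˣ) {V : Type*} [Fintype V] [DecidableEq V]
    (G : WMG R V) (n : ℕ) (vtx : Fin (n + 1) → V) (hinj : Function.Injective vtx)
    (hloop : ∀ i, G.adj (vtx i) (vtx i) = 0)
    (hclique : ∀ i j, i ≠ j → G.adj (vtx i) (vtx j) = 1)
    (htwin : ∀ i j, ∀ w : V, w ∉ Set.range vtx → G.adj (vtx i) w = G.adj (vtx j) w)
    (S : Finset V) (hS : S = (Finset.univ.filter fun i => i ≠ (0 : Fin (n + 1))).image vtx)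
    (h0 : vtx 0 ∉ S)
    (ρ : ℕ) (hρ : ρ = (Finset.univ.filter fun i => vtx i ∉ G.marked).card)
    (G' : WMG R {x : V // x ∉ S})
    (hadj' : G'.adj = (G.delete S).adj)
    (hphi' : G'.phi = G.phi)
    (hmarked' : ∀ x : {x : V // x ∉ S}, x ∈ G'.marked ↔
        (if (x : V) = vtx 0 then ρ % 2 = 0 else (x : V) ∈ G.marked))
    (halpha' : ∀ x : {x : V // x ∉ S}, G'.alpha x =
        if (x : V) = vtx 0 then ∏ i, G.alpha (vtx i) else G.alpha x)
    (hbeta' : ∀ x : {x : V // x ∉ S}, G'.beta x =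
        if (x : V) = vtx 0 then
          (↑d⁻¹ : R) * (-(∏ i, G.alpha (vtx i)) +
            ∏ i, (G.alpha (vtx i) + (d : R) * G.beta (vtx i)))
        else G.beta x) :
    G.bracket d = G'.bracket d := by
  classical
  have hSmem : ∀ v, v ∈ S ↔ ∃ i, i ≠ 0 ∧ vtx i = v := by
    intro v; rw [hS]; simp
  -- `V` and the vertex set after deletion are the twins, respectively one point, plus the
  -- same outside vertices
  let e : Fin (n + 1) ⊕ {w : V // w ∉ Set.range vtx} ≃ V :=
    Equiv.ofBijective (Sum.elim vtx fun w => w.1) (by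
      constructor
      · rintro (i | w) (i' | w') h
        · exact congrArg _ (hinj h)
        · exact (w'.2 ⟨i, h⟩).elim
        · exact (w.2 ⟨i', h.symm⟩).elim
        · exact congrArg _ (Subtype.ext h)
      · intro v
        by_cases hv : v ∈ Set.range vtx
        · obtain ⟨i, rfl⟩ := hv
          exact ⟨.inl i, rfl⟩
        · exact ⟨.inr ⟨v, hv⟩, rfl⟩)
  let e' : Unit ⊕ {w : V // w ∉ Set.range vtx} ≃ {x : V // x ∉ S} :=
    Equiv.ofBijective (Sum.elim (fun _ => ⟨vtx 0, h0⟩) fun w => ⟨w.1, fun hw => w.2 (by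
        obtain ⟨i, -, hi⟩ := (hSmem _).1 hw
        exact ⟨i, hi⟩)⟩) (by
      constructor
      · rintro (i | w) (i' | w') h
        · rfl
        · exact (w'.2 ⟨0, congrArg Subtype.val h⟩).elim
        · exact (w.2 ⟨0, (congrArg Subtype.val h).symm⟩).elim
        · exact congrArg _ (Subtype.ext (congrArg (fun x => x.1) h))
      · rintro ⟨v, hvS⟩
        by_cases hv : v ∈ Set.range vtx
        · obtain ⟨i, rfl⟩ := hv
          have hi : i = 0 := by
            by_contra hi
            exact hvS ((hSmem _).2 ⟨i, hi, rfl⟩)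
          subst hi
          exact ⟨.inl (), rfl⟩
        · exact ⟨.inr ⟨v, hv⟩, rfl⟩)
  have hne : ∀ w : {w : V // w ∉ Set.range vtx}, w.1 ≠ vtx 0 := fun w h => w.2 ⟨0, h.symm⟩
  have hadj : ∀ x y, G'.adj x y = G.adj x.1 y.1 := by
    intro x y; rw [hadj']; rfl
  have hmk : ∀ w, e' (.inr w) ∈ G'.marked ↔ w.1 ∈ G.marked := by
    intro w
    rw [hmarked', if_neg]
    · rfl
    · exact hne w
  have hN := TwinReduction.nullity_eq_finrank_clique G e (fun w => G.adj (vtx 0) w.1)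
    (fun w w' => G.adj w.1 w'.1) (fun i => vtx i ∈ G.marked) (fun w => w.1 ∈ G.marked) (by
      intro i i'
      by_cases h : i = i'
      · subst h; rw [if_pos rfl]; exact hloop i
      · rw [if_neg h]; exact hclique i i' h) (fun i w => htwin i 0 w.1 w.2) (fun _ _ => rfl)
    (fun i => Iff.rfl) (fun w => Iff.rfl)
  have hN' := TwinReduction.nullity_eq_finrank_clique G' e' (fun w => G.adj (vtx 0) w.1)
    (fun w w' => G.adj w.1 w'.1) (fun _ => ρ % 2 = 0) (fun w => w.1 ∈ G.marked) (by
      intro i i'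
      rw [if_pos rfl, hadj]; exact hloop 0) (fun i w => hadj _ _)
    (fun _ _ => hadj _ _) (by intro i; rw [hmarked', if_pos]; rfl) hmk
  rw [TwinReduction.bracket_split d G e _ hN, TwinReduction.bracket_split d G' e' _ hN', hphi']
  congr 1
  refine Finset.sum_congr rfl fun B _ => ?_
  congr 1
  · congr 1
    · refine Finset.prod_congr rfl fun w _ => ?_
      rw [halpha', if_neg]
      · rfl
      · exact hne w
    · refine Finset.prod_congr rfl fun w _ => ?_
      rw [hbeta', if_neg]
      · rfl
      · exact hne w
  · rw [TwinReduction.clique_sum d _ _ _ _ _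
      (TwinReduction.finrank_clique_empty _ _ _ _ (fun _ => ρ % 2 = 0) (by
        rw [hρ]; convert Iff.rfl))
      (fun A hA => TwinReduction.finrank_clique_nonempty _ _ _ _ (fun _ => ρ % 2 = 0) A hA)]
    have hα : G'.alpha (e' (.inl ())) = ∏ i, G.alpha (vtx i) := by
      rw [halpha', if_pos]; rfl
    have hβ : G'.beta (e' (.inl ())) = (↑d⁻¹ : R) * (-(∏ i, G.alpha (vtx i)) +
            ∏ i, (G.alpha (vtx i) + (d : R) * G.beta (vtx i))) := by
      rw [hbeta', if_pos]; rfl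
    have hU : (Finset.univ : Finset (Finset Unit)) = {∅, {()}} := by decide
    rw [hU, Finset.sum_pair (by decide)]
    have hc : (({()} : Finset Unit)ᶜ) = ∅ := by decide
    have hc' : ((∅ : Finset Unit)ᶜ) = {()} := by decide
    simp only [hc, hc', Finset.prod_empty, Finset.prod_singleton, mul_one, one_mul, hα, hβ]
    rfl
end

section
/- Let G be a weighted marked graph over R and suppose k ≥ 3 is odd and v₁, ..., v_k are unmarked, pairwise nonadjacent, unlooped twins in G. Let (G − v₂ − ... − v_k)' be the weighted marked graph obtained from G − v₂ − ... − v_k by changing the weights of v₁ to β'(v₁) = ∏_{i=1}^{k} β(v_i) and α'(v₁) = d^{−1}·(−β'(v₁) + ∏_{i=1}^{k} (α(v_i)·d + β(v_i))). Then [G] = [(G − v₂ − ... − v_k)']. -/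
namespace WMG

open Module

/-! ### Nullity as the dimension of a kernel -/

/-- Linear maps that restrict to mutually inverse maps between two submodules show that these
have the same dimension. -/
lemma finrank_eq_of_inverse {F E E' : Type*} [Field F] [AddCommGroup E] [Module F E]
    [AddCommGroup E'] [Module F E'] (p : Submodule F E) (q : Submodule F E')
    (f : E →ₗ[F] E') (g : E' →ₗ[F] E) (hf : ∀ x ∈ p, f x ∈ q) (hg : ∀ x ∈ q, g x ∈ p)
    (hgf : ∀ x ∈ p, g (f x) = x) (hfg : ∀ x ∈ q, f (g x) = x) :
    finrank F p = finrank F q := by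
  refine LinearEquiv.finrank_eq (LinearEquiv.ofLinearMap (f.restrict hf) (g.restrict hg) ?_ ?_)
  · ext x
    exact hfg x.1 x.2
  · ext x
    exact hgf x.1 x.2

/-- The kernel of the principal submatrix of `A` on the index set `K`, realised as a space of
vectors on the full index set that vanish outside `K`. -/
def kerOn {U : Type*} [Fintype U] (A : Matrix U U (ZMod 2)) (K : Finset U) :
    Submodule (ZMod 2) (U → ZMod 2) where
  carrier := {x | (∀ u, u ∉ K → x u = 0) ∧ ∀ u ∈ K, ∑ v, A u v * x v = 0}
  zero_mem' := by simp
  add_mem' := by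
    rintro x y ⟨hx, hx'⟩ ⟨hy, hy'⟩
    refine ⟨fun u hu => by simp [hx u hu, hy u hu], fun u hu => ?_⟩
    simp [mul_add, Finset.sum_add_distrib, hx' u hu, hy' u hu]
  smul_mem' := by
    rintro a x ⟨hx, hx'⟩
    refine ⟨fun u hu => by simp [hx u hu], fun u hu => ?_⟩
    simp [mul_left_comm _ a, ← Finset.mul_sum, hx' u hu]

lemma nullity_eq_finrank_kerOn {R U : Type*} [Fintype U] [DecidableEq U] (G : WMG R U)
    (T : Finset U) : G.nullity T = finrank (ZMod 2) (kerOn (G.adjT T) (G.keep T)) := by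
  set K := G.keep T
  set A := (G.adjT T).submatrix (fun i : {x // x ∈ K} => i.1) (fun j : {x // x ∈ K} => j.1)
  have h := LinearMap.finrank_range_add_finrank_ker A.mulVecLin
  have h1 : G.nullity T = finrank (ZMod 2) (LinearMap.ker A.mulVecLin) := by
    have h2 : G.nullity T = Fintype.card {x // x ∈ K} - A.rank := rfl
    rw [Module.finrank_fintype_fun_eq_card] at h
    rw [h2, Matrix.rank]
    omega
  rw [h1]
  have hsum : ∀ (x : U → ZMod 2) (u : U), (∀ u, u ∉ K → x u = 0) →
      ∑ v, G.adjT T u v * x v = ∑ v : {v // v ∈ K}, G.adjT T u v.1 * x v.1 := by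
    intro x u hx
    rw [Finset.sum_coe_sort K (fun v => G.adjT T u v * x v)]
    refine (Finset.sum_subset (Finset.subset_univ K) fun v _ hv => ?_).symm
    rw [hx v hv, mul_zero]
  refine finrank_eq_of_inverse _ _
    { toFun := fun z u => if h : u ∈ K then z ⟨u, h⟩ else 0
      map_add' := fun a b => by ext u; by_cases h : u ∈ K <;> simp [h]
      map_smul' := fun a b => by ext u; by_cases h : u ∈ K <;> simp [h] }
    (LinearMap.funLeft (ZMod 2) (ZMod 2) Subtype.val) ?_ ?_ ?_ ?_
  · intro z hz
    rw [LinearMap.mem_ker] at hz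
    have hzero : ∀ u, u ∉ K → (fun u => if h : u ∈ K then z ⟨u, h⟩ else 0) u = 0 :=
      fun u hu => by simp [hu]
    refine ⟨hzero, fun u hu => ?_⟩
    refine (hsum _ u hzero).trans ?_
    have := congrFun hz ⟨u, hu⟩
    simpa [Matrix.mulVec, dotProduct, A] using this
  · rintro x ⟨hx, hx'⟩
    rw [LinearMap.mem_ker]
    ext u
    have := hx' u.1 u.2
    rw [hsum x u.1 hx] at this
    simpa [Matrix.mulVec, dotProduct, A, LinearMap.funLeft_apply] using this
  · intro z _
    ext u
    simp [LinearMap.funLeft_apply]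
  · rintro x ⟨hx, -⟩
    ext u
    by_cases h : u ∈ K
    · simp [h, LinearMap.funLeft_apply]
    · simp [h, hx u h]

/-! ### The linear system of a graph with twins -/

/-- The solution space of the linear system of a graph whose vertices are split into twins,
indexed by `ι`, and other vertices, indexed by `W`. Here `c` is the common neighbourhood vector of
the twins, `P` the set of toggled twins, `M` the toggled matrix on `W`, and `K` the set of vertices
of `W` that survive the deletion. -/
def solSpace (ι : Type*) {W : Type*} [Fintype ι] [DecidableEq ι] [Fintype W]
    (M : Matrix W W (ZMod 2)) (c : W → ZMod 2) (K : Finset W) (P : Finset ι) :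
    Submodule (ZMod 2) ((ι → ZMod 2) × (W → ZMod 2)) where
  carrier := {p | (∀ w, w ∉ K → p.2 w = 0) ∧
    (∀ i, ∑ w, c w * p.2 w + (if i ∈ P then p.1 i else 0) = 0) ∧
    ∀ w ∈ K, ∑ w', M w w' * p.2 w' + c w * ∑ i, p.1 i = 0}
  zero_mem' := by simp
  add_mem' := by
    rintro p q ⟨h1, h2, h3⟩ ⟨k1, k2, k3⟩
    refine ⟨fun w hw => by simp [h1 w hw, k1 w hw], fun i => ?_, fun w hw => ?_⟩
    · have := congrArg₂ (· + ·) (h2 i) (k2 i)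
      simp only [add_zero] at this
      refine Eq.trans ?_ this
      simp only [Prod.snd_add, Prod.fst_add, Pi.add_apply, mul_add, Finset.sum_add_distrib]
      split_ifs <;> ring
    · have := congrArg₂ (· + ·) (h3 w hw) (k3 w hw)
      simp only [add_zero] at this
      refine Eq.trans ?_ this
      simp only [Prod.snd_add, Prod.fst_add, Pi.add_apply, mul_add, Finset.sum_add_distrib]
      ring
  smul_mem' := by
    rintro a p ⟨h1, h2, h3⟩
    refine ⟨fun w hw => by simp [h1 w hw], fun i => ?_, fun w hw => ?_⟩
    · have := congrArg (a * ·) (h2 i)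
      simp only [mul_zero] at this
      refine Eq.trans ?_ this
      simp only [Prod.smul_snd, Prod.smul_fst, Pi.smul_apply, smul_eq_mul, mul_add,
        Finset.mul_sum, mul_left_comm _ a]
      split_ifs <;> ring
    · have := congrArg (a * ·) (h3 w hw)
      simp only [mul_zero] at this
      refine Eq.trans ?_ this
      simp only [Prod.smul_snd, Prod.smul_fst, Pi.smul_apply, smul_eq_mul, mul_add,
        Finset.mul_sum, mul_left_comm _ a]

/-- An odd set of fully toggled twins contributes the same nullity as one toggled vertex. -/
lemma finrank_solSpace_univ {ι W : Type*} [Fintype ι] [DecidableEq ι] [Fintype W]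
    (hodd : Odd (Fintype.card ι))
    (M : Matrix W W (ZMod 2)) (c : W → ZMod 2) (K : Finset W) :
    finrank (ZMod 2) (solSpace ι M c K Finset.univ) =
      finrank (ZMod 2) (solSpace Unit M c K Finset.univ) := by
  have hcard : ((Fintype.card ι : ℕ) : ZMod 2) = 1 := by
    obtain ⟨m, hm⟩ := hodd
    rw [hm]
    push_cast
    rw [show (2 : ZMod 2) = 0 from rfl]
    ring
  have hpos : 0 < Fintype.card ι := hodd.pos
  obtain ⟨i0⟩ := Fintype.card_pos_iff.mp hpos
  -- All twin coordinates of a solution are equal to `c ⬝ y`.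
  have hconst : ∀ p ∈ solSpace ι M c K Finset.univ, ∀ i, p.1 i = p.1 i0 := by
    rintro p ⟨-, h2, -⟩ i
    have h := (h2 i).trans (h2 i0).symm
    simpa using h
  refine finrank_eq_of_inverse _ _
    ((LinearMap.funLeft (ZMod 2) (ZMod 2) (fun _ : Unit => i0)).prodMap LinearMap.id)
    ((LinearMap.funLeft (ZMod 2) (ZMod 2) (fun _ : ι => ())).prodMap LinearMap.id) ?_ ?_ ?_ ?_
  · intro p hp
    have hc := hconst p hp
    obtain ⟨h1, h2, h3⟩ := hp
    refine ⟨h1, fun i => by simpa [LinearMap.funLeft_apply] using h2 i0, fun w hw => ?_⟩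
    have := h3 w hw
    simpa [LinearMap.funLeft_apply, hc, hcard] using this
  · rintro p ⟨h1, h2, h3⟩
    refine ⟨h1, fun i => by simpa [LinearMap.funLeft_apply] using h2 (), fun w hw => ?_⟩
    have := h3 w hw
    simpa [LinearMap.funLeft_apply, hcard] using this
  · intro p hp
    refine Prod.ext ?_ rfl
    ext i
    simp [LinearMap.funLeft_apply, hconst p hp i]
  · intro p _
    exact Prod.ext rfl rfl

/-- If some twin is not toggled, only the sum of the coordinates at the non-toggled twins is
constrained, so all but one of these coordinates are free. -/
lemma finrank_solSpace_compl {ι W : Type*} [Fintype ι] [DecidableEq ι] [Fintype W]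
    (M : Matrix W W (ZMod 2)) (c : W → ZMod 2) (K : Finset W) (P : Finset ι)
    (hP : P ≠ Finset.univ) :
    finrank (ZMod 2) (solSpace ι M c K P) + 1 =
      finrank (ZMod 2) (solSpace Unit M c K ∅) + Pᶜ.card := by
  obtain ⟨i0, hi0⟩ : ∃ i, i ∉ P := by
    by_contra! h
    exact hP (Finset.eq_univ_iff_forall.mpr h)
  have hc : (Pᶜ.erase i0).card + 1 = Pᶜ.card :=
    Finset.card_erase_add_one (by simpa using hi0)
  set Z := {i // i ∈ Pᶜ.erase i0} with hZ
  have hdim : finrank (ZMod 2) ((solSpace Unit M c K ∅).prod (⊤ : Submodule (ZMod 2) (Z → ZMod 2)))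
      = finrank (ZMod 2) (solSpace Unit M c K ∅) + (Pᶜ.erase i0).card := by
    let E : ((solSpace Unit M c K ∅).prod (⊤ : Submodule (ZMod 2) (Z → ZMod 2))) ≃ₗ[ZMod 2]
        (solSpace Unit M c K ∅) × (Z → ZMod 2) :=
      { toFun := fun q => (⟨q.1.1, q.2.1⟩, q.1.2)
        invFun := fun q => ⟨(q.1.1, q.2), q.1.2, trivial⟩
        map_add' := fun _ _ => rfl
        map_smul' := fun _ _ => rfl }
    rw [E.finrank_eq, Module.finrank_prod, Module.finrank_fintype_fun_eq_card, Fintype.card_coe]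
  have hmemZ : ∀ i, i ∈ Pᶜ.erase i0 ↔ i ≠ i0 ∧ i ∉ P := by simp
  -- Coordinates vanishing on `P` split into the one at `i0` and the remaining ones.
  have hsum : ∀ x : ι → ZMod 2, (∀ i ∈ P, x i = 0) → ∑ i, x i = x i0 + ∑ z : Z, x z.1 := by
    intro x hx
    rw [Finset.sum_coe_sort (Pᶜ.erase i0) x, Finset.add_sum_erase _ _ (by simpa using hi0)]
    refine (Finset.sum_subset (Finset.subset_univ _) fun v _ hv => hx v (by simpa using hv)).symm
  have hfill : ∀ (s : ZMod 2) (z : Z → ZMod 2), ∑ i, (if h : i ∈ Pᶜ.erase i0 then z ⟨i, h⟩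
      else if i = i0 then s - ∑ z', z z' else 0) = s := by
    intro s z
    refine (hsum _ fun i hi => ?_).trans ?_
    · have : i ≠ i0 := fun h => hi0 (h ▸ hi)
      simp [hi, this]
    · have h1 : ∀ z' : Z, (if h : z'.1 ∈ Pᶜ.erase i0 then z ⟨z'.1, h⟩
          else if z'.1 = i0 then s - ∑ z', z z' else 0) = z z' := fun z' => dif_pos z'.2
      rw [Finset.sum_congr rfl fun z' _ => h1 z', dif_neg (by simp), if_pos rfl, sub_add_cancel]
  have key : finrank (ZMod 2) (solSpace ι M c K P) =
      finrank (ZMod 2)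
        ((solSpace Unit M c K ∅).prod (⊤ : Submodule (ZMod 2) (Z → ZMod 2))) := by
    have hvan : ∀ p ∈ solSpace ι M c K P, ∑ w, c w * p.2 w = 0 ∧ ∀ i ∈ P, p.1 i = 0 := by
      rintro p ⟨-, h2, -⟩
      have h0 := h2 i0
      rw [if_neg hi0, add_zero] at h0
      refine ⟨h0, fun i hi => ?_⟩
      have := h2 i
      rwa [if_pos hi, h0, zero_add] at this
    refine finrank_eq_of_inverse _ _
      { toFun := fun p => ((fun _ => ∑ i, p.1 i, p.2), fun z => p.1 z.1)
        map_add' := fun p q => by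
          refine Prod.ext (Prod.ext ?_ rfl) rfl
          ext; simp [Finset.sum_add_distrib]
        map_smul' := fun a p => by
          refine Prod.ext (Prod.ext ?_ rfl) rfl
          ext; simp [Finset.mul_sum] }
      { toFun := fun q => (fun i => if h : i ∈ Pᶜ.erase i0 then q.2 ⟨i, h⟩
          else if i = i0 then q.1.1 () - ∑ z, q.2 z else 0, q.1.2)
        map_add' := fun p q => by
          refine Prod.ext ?_ rfl
          ext i
          by_cases h : i ∈ Pᶜ.erase i0
          · simp only [h, dite_true, Prod.fst_add, Prod.snd_add, Pi.add_apply]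
          · by_cases h' : i = i0
            · simp [h', Finset.sum_add_distrib]; ring
            · simp only [h, h', dite_false, if_false, Prod.fst_add, Pi.add_apply, add_zero]
        map_smul' := fun a p => by
          refine Prod.ext ?_ rfl
          ext i
          by_cases h : i ∈ Pᶜ.erase i0
          · simp only [h, dite_true, Prod.smul_fst, Prod.smul_snd, Pi.smul_apply, RingHom.id_apply]
          · by_cases h' : i = i0
            · simp [h', ← Finset.mul_sum, mul_sub]
            · simp only [h, h', dite_false, if_false, Prod.smul_fst, Pi.smul_apply,
                RingHom.id_apply, smul_zero] } ?_ ?_ ?_ ?_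
    · intro p hp
      obtain ⟨h0, -⟩ := hvan p hp
      obtain ⟨h1, h2, h3⟩ := hp
      refine ⟨⟨h1, fun i => by simpa using h0, fun w hw => ?_⟩, trivial⟩
      simpa using h3 w hw
    · rintro ⟨⟨s, y⟩, z⟩ ⟨⟨h1, h2, h3⟩, -⟩
      have h0 : ∑ w, c w * y w = 0 := by simpa using h2 ()
      refine ⟨h1, fun i => ?_, fun w hw => ?_⟩
      · by_cases hi : i ∈ P
        · have : i ≠ i0 := fun h => hi0 (h ▸ hi)
          simpa [hi, this] using h0
        · simpa [hi] using h0
      · have := h3 w hw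
        simp only [Finset.univ_unique, Finset.sum_singleton] at this
        refine Eq.trans ?_ this
        exact congrArg (fun t => ∑ w', M w w' * y w' + c w * t) (hfill (s ()) z)
    · intro p hp
      obtain ⟨h0, hv⟩ := hvan p hp
      refine Prod.ext ?_ rfl
      ext i
      by_cases h : i ∈ Pᶜ.erase i0
      · simp only [LinearMap.coe_mk, AddHom.coe_mk, h, dite_true]
      · by_cases h' : i = i0
        · subst h'
          simp [hsum p.1 hv]
        · have hi : i ∈ P := by
            by_contra hi
            exact h ((hmemZ i).mpr ⟨h', hi⟩)
          simp [h', hi, hv i hi]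
    · rintro ⟨⟨s, y⟩, z⟩ _
      refine Prod.ext (Prod.ext ?_ rfl) ?_
      · ext
        exact hfill _ z
      · ext z
        exact dif_pos z.2
  rw [key, hdim]
  omega

/-! ### Summation over sets of twins -/

/-- The sum over all subsets of an odd set of twins, with the rest of the graph held fixed. -/
lemma sum_weights {R ι W : Type*} [CommRing R] [Fintype ι] [DecidableEq ι] [Fintype W]
    (hodd : Odd (Fintype.card ι)) (d : Rˣ) (a b : ι → R)
    (M : Matrix W W (ZMod 2)) (c : W → ZMod 2) (K : Finset W) :
    ∑ P : Finset ι, (∏ i ∈ Pᶜ, a i) * (∏ i ∈ P, b i) *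
        (d : R) ^ finrank (ZMod 2) (solSpace ι M c K P) =
      (∏ i, b i) * (d : R) ^ finrank (ZMod 2) (solSpace Unit M c K Finset.univ) +
      (d : R) ^ finrank (ZMod 2) (solSpace Unit M c K ∅) *
        ((↑d⁻¹ : R) * (-(∏ i, b i) + ∏ i, (a i * (d : R) + b i))) := by
  have hexp : ∏ i, (a i * (d : R) + b i) =
      ∑ P : Finset ι, (∏ i ∈ Pᶜ, a i) * (∏ i ∈ P, b i) * (d : R) ^ Pᶜ.card := by
    simp_rw [add_comm (_ * (d : R))]
    rw [Finset.prod_add, Finset.powerset_univ]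
    refine Finset.sum_congr rfl fun P _ => ?_
    rw [← Finset.compl_eq_univ_sdiff, Finset.prod_mul_distrib, Finset.prod_const]
    ring
  rw [hexp, ← Finset.add_sum_erase _ _ (Finset.mem_univ (Finset.univ : Finset ι)),
    ← Finset.add_sum_erase (f := fun P : Finset ι =>
      (∏ i ∈ Pᶜ, a i) * (∏ i ∈ P, b i) * (d : R) ^ Pᶜ.card) _
      (Finset.mem_univ (Finset.univ : Finset ι)), finrank_solSpace_univ hodd]
  simp only [Finset.compl_univ, Finset.prod_empty, one_mul, Finset.card_empty, pow_zero, mul_one,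
    neg_add_cancel_left, Finset.mul_sum]
  congr 1
  refine Finset.sum_congr rfl fun P hP => ?_
  have h := finrank_solSpace_compl M c K P (Finset.ne_of_mem_erase hP)
  have h2 : (d : R) ^ finrank (ZMod 2) (solSpace ι M c K P) =
      (d : R) ^ finrank (ZMod 2) (solSpace Unit M c K ∅) * ((↑d⁻¹ : R) * (d : R) ^ Pᶜ.card) := by
    rw [mul_left_comm, ← pow_add, ← h, pow_succ, mul_comm, mul_assoc, Units.mul_inv, mul_one]
  rw [h2]
  ring

/-- The bracket of a graph whose vertices are split by `e` into nonadjacent unlooped unmarked twins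
and other vertices, as a double sum over subsets of the two parts. -/
lemma bracket_eq_sum {R ι W U : Type*} [CommRing R] [Fintype ι] [DecidableEq ι] [Fintype W]
    [DecidableEq W] [Fintype U] [DecidableEq U] (d : Rˣ) (G : WMG R U) (e : ι ⊕ W ≃ U)
    (M : Matrix W W (ZMod 2)) (c : W → ZMod 2) (mk : Finset W)
    (h11 : ∀ i j, G.adj (e (.inl i)) (e (.inl j)) = 0)
    (h12 : ∀ i w, G.adj (e (.inl i)) (e (.inr w)) = c w)
    (h22 : ∀ w w', G.adj (e (.inr w)) (e (.inr w')) = M w w')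
    (hm1 : ∀ i, e (.inl i) ∉ G.marked) (hm2 : ∀ w, e (.inr w) ∈ G.marked ↔ w ∈ mk) :
    G.bracket d = (d : R) ^ G.phi * ∑ Q : Finset W,
      (∏ w ∈ Qᶜ, G.alpha (e (.inr w))) * (∏ w ∈ Q, G.beta (e (.inr w))) *
      ∑ P : Finset ι, (∏ i ∈ Pᶜ, G.alpha (e (.inl i))) * (∏ i ∈ P, G.beta (e (.inl i))) *
        (d : R) ^ finrank (ZMod 2) (solSpace ι
          (Matrix.of fun w w' => M w w' + if w = w' ∧ w ∈ Q then 1 else 0) c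
          (Finset.univ.filter fun w => ¬(w ∈ mk ∧ M w w + (if w ∈ Q then 1 else 0) = 0)) P) := by
  have h21 : ∀ i w, G.adj (e (.inr w)) (e (.inl i)) = c w := fun i w => by
    rw [← h12 i w]; exact G.symm.apply _ _
  unfold bracket
  congr 1
  simp_rw [Finset.mul_sum]
  rw [Finset.sum_comm, ← Fintype.sum_prod_type']
  rw [← Equiv.sum_comp (Finset.sumEquiv.symm.toEquiv.trans e.finsetCongr)]
  refine Finset.sum_congr rfl ?_
  rintro ⟨P, Q⟩ -
  have hT : (Finset.sumEquiv.symm.toEquiv.trans e.finsetCongr) (P, Q) =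
      (P.disjSum Q).map e.toEmbedding := rfl
  have hTc : ((P.disjSum Q).map e.toEmbedding)ᶜ = (Pᶜ.disjSum Qᶜ).map e.toEmbedding := by
    ext u
    obtain ⟨s, rfl⟩ := e.surjective u
    rcases s with i | w <;> simp
  rw [hT, hTc, Finset.prod_map, Finset.prod_map, Finset.prod_disjSum, Finset.prod_disjSum,
    nullity_eq_finrank_kerOn]
  set T := (P.disjSum Q).map e.toEmbedding
  have hT1 : ∀ i, e (.inl i) ∈ T ↔ i ∈ P := fun i => by simp [T]
  have hT2 : ∀ w, e (.inr w) ∈ T ↔ w ∈ Q := fun w => by simp [T]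
  set MQ : Matrix W W (ZMod 2) :=
    Matrix.of fun w w' => M w w' + if w = w' ∧ w ∈ Q then 1 else 0
  set K : Finset W :=
    Finset.univ.filter fun w => ¬(w ∈ mk ∧ M w w + (if w ∈ Q then 1 else 0) = 0)
  have a11 : ∀ i j, G.adjT T (e (.inl i)) (e (.inl j)) = if i = j ∧ i ∈ P then 1 else 0 := by
    intro i j; simp [adjT, h11, hT1]
  have a12 : ∀ i w, G.adjT T (e (.inl i)) (e (.inr w)) = c w := by
    intro i w; simp [adjT, h12]
  have a21 : ∀ i w, G.adjT T (e (.inr w)) (e (.inl i)) = c w := by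
    intro i w; simp [adjT, h21]
  have a22 : ∀ w w', G.adjT T (e (.inr w)) (e (.inr w')) = MQ w w' := by
    intro w w'; simp [adjT, h22, hT2, MQ]
  have k1 : ∀ i, e (.inl i) ∈ G.keep T := fun i => by simp [keep, hm1]
  have k2 : ∀ w, e (.inr w) ∈ G.keep T ↔ w ∈ K := fun w => by
    simp [keep, hm2, a22, K, MQ]
  have hdim : finrank (ZMod 2) (kerOn (G.adjT T) (G.keep T)) =
      finrank (ZMod 2) (solSpace ι MQ c K P) := by
    have hs : ∀ (x : U → ZMod 2) (u : U), ∑ v, G.adjT T u v * x v =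
        ∑ i, G.adjT T u (e (.inl i)) * x (e (.inl i)) +
        ∑ w, G.adjT T u (e (.inr w)) * x (e (.inr w)) := fun x u => by
      rw [← Equiv.sum_comp e, Fintype.sum_sum_type]
    have hs1 : ∀ (x : U → ZMod 2) (i : ι), ∑ v, G.adjT T (e (.inl i)) v * x v =
        ∑ w, c w * x (e (.inr w)) + if i ∈ P then x (e (.inl i)) else 0 := fun x i => by
      rw [hs, add_comm]
      simp [a11, a12, ite_and]
    have hs2 : ∀ (x : U → ZMod 2) (w : W), ∑ v, G.adjT T (e (.inr w)) v * x v =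
        ∑ w', MQ w w' * x (e (.inr w')) + c w * ∑ i, x (e (.inl i)) := fun x w => by
      rw [hs, add_comm]
      simp [a21, a22, Finset.mul_sum]
    refine finrank_eq_of_inverse _ _
      ((LinearMap.funLeft (ZMod 2) (ZMod 2) (fun i : ι => e (.inl i))).prod
        (LinearMap.funLeft (ZMod 2) (ZMod 2) (fun w : W => e (.inr w))))
      { toFun := fun p u => Sum.elim p.1 p.2 (e.symm u)
        map_add' := fun p q => by
          ext u; rcases h : e.symm u with i | w <;> simp [h]
        map_smul' := fun a p => by
          ext u; rcases h : e.symm u with i | w <;> simp [h] } ?_ ?_ ?_ ?_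
    · rintro x ⟨hx, hx'⟩
      refine ⟨fun w hw => hx _ (by rwa [k2]), fun i => ?_, fun w hw => ?_⟩
      · exact (hs1 x i).symm.trans (hx' _ (k1 i))
      · exact (hs2 x w).symm.trans (hx' _ ((k2 w).mpr hw))
    · rintro ⟨x, y⟩ ⟨h1, h2, h3⟩
      refine ⟨fun u hu => ?_, fun u hu => ?_⟩
      · obtain ⟨s, rfl⟩ := e.surjective u
        rcases s with i | w
        · exact absurd (k1 i) hu
        · rw [k2] at hu
          simpa using h1 w hu
      · obtain ⟨s, rfl⟩ := e.surjective u
        rcases s with i | w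
        · rw [hs1]
          simpa using h2 i
        · rw [hs2]
          simpa using h3 w ((k2 w).mp hu)
    · intro x _
      ext u
      obtain ⟨s, rfl⟩ := e.surjective u
      rcases s with i | w <;> simp [LinearMap.funLeft_apply]
    · intro p _
      refine Prod.ext ?_ ?_ <;> ext u <;> simp [LinearMap.funLeft_apply]
  rw [hdim]
  simp only [Equiv.coe_toEmbedding]
  ring

end WMG

/-! ### Reduction to a single twin -/

theorem nonadjacent_twin_reduction_odd {R : Type*} [CommRing R] (d : Rˣ) {V : Type*} [Fintype V] [DecidableEq V]
    (G : WMG R V) (n : ℕ) (vtx : Fin (n + 1) → V) (hinj : Function.Injective vtx)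
    (hk : 3 ≤ n + 1) (hodd : Odd (n + 1))
    (hloop : ∀ i, G.adj (vtx i) (vtx i) = 0)
    (hunmarked : ∀ i, vtx i ∉ G.marked)
    (hnonadj : ∀ i j, i ≠ j → G.adj (vtx i) (vtx j) = 0)
    (htwin : ∀ i j, ∀ w : V, w ∉ Set.range vtx → G.adj (vtx i) w = G.adj (vtx j) w)
    (S : Finset V) (hS : S = (Finset.univ.filter fun i => i ≠ (0 : Fin (n + 1))).image vtx)
    (h0 : vtx 0 ∉ S)
    (G' : WMG R {x : V // x ∉ S})
    (hadj' : G'.adj = (G.delete S).adj)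
    (hphi' : G'.phi = G.phi)
    (hmarked' : ∀ x : {x : V // x ∉ S}, x ∈ G'.marked ↔ (x : V) ∈ G.marked)
    (halpha' : ∀ x : {x : V // x ∉ S}, G'.alpha x =
        if (x : V) = vtx 0 then
          (↑d⁻¹ : R) * (-(∏ i, G.beta (vtx i)) +
            ∏ i, (G.alpha (vtx i) * (d : R) + G.beta (vtx i)))
        else G.alpha x)
    (hbeta' : ∀ x : {x : V // x ∉ S}, G'.beta x =
        if (x : V) = vtx 0 then ∏ i, G.beta (vtx i) else G.beta x) :
    G.bracket d = G'.bracket d := by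
  classical
  have hmemS : ∀ v, v ∈ S ↔ ∃ i, i ≠ 0 ∧ vtx i = v := by
    intro v; simp [hS]
  have hWS : ∀ w : {v : V // v ∉ Finset.univ.image vtx}, w.1 ∉ S := by
    rintro ⟨w, hw⟩ h
    obtain ⟨i, -, rfl⟩ := (hmemS w).mp h
    exact hw (by simp)
  have hWne : ∀ (w : {v : V // v ∉ Finset.univ.image vtx}) i, w.1 ≠ vtx i := by
    rintro ⟨w, hw⟩ i rfl
    exact hw (by simp)
  have hWrange : ∀ w : {v : V // v ∉ Finset.univ.image vtx}, w.1 ∉ Set.range vtx := by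
    rintro w ⟨i, hi⟩
    exact hWne w i hi.symm
  let e : Fin (n + 1) ⊕ {v : V // v ∉ Finset.univ.image vtx} ≃ V :=
    Equiv.ofBijective (Sum.elim vtx Subtype.val) (by
      constructor
      · rintro (i | w) (j | w') h
        · exact congrArg _ (hinj h)
        · exact absurd h.symm (hWne w' i)
        · exact absurd h (hWne w j)
        · exact congrArg _ (Subtype.ext h)
      · intro v
        by_cases h : v ∈ Finset.univ.image vtx
        · obtain ⟨i, -, rfl⟩ := Finset.mem_image.mp h
          exact ⟨.inl i, rfl⟩
        · exact ⟨.inr ⟨v, h⟩, rfl⟩)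
  -- The reduced graph has the same other vertices, and the single remaining twin `vtx 0`.
  let e' : Unit ⊕ {v : V // v ∉ Finset.univ.image vtx} ≃ {x : V // x ∉ S} :=
    Equiv.ofBijective (Sum.elim (fun _ => ⟨vtx 0, h0⟩) (fun w => ⟨w.1, hWS w⟩)) (by
      constructor
      · rintro (i | w) (j | w') h
        · rfl
        · exact absurd (congrArg Subtype.val h).symm (hWne w' 0)
        · exact absurd (congrArg Subtype.val h) (hWne w 0)
        · exact congrArg _ (Subtype.ext (congrArg (fun x : {x : V // x ∉ S} => x.1) h))
      · rintro ⟨v, hv⟩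
        by_cases h : v ∈ Finset.univ.image vtx
        · obtain ⟨i, -, rfl⟩ := Finset.mem_image.mp h
          have hi : i = 0 := by
            by_contra hi
            exact hv ((hmemS _).mpr ⟨i, hi, rfl⟩)
          subst hi
          exact ⟨.inl (), rfl⟩
        · exact ⟨.inr ⟨v, h⟩, rfl⟩)
  have he1 : ∀ i, e (.inl i) = vtx i := fun _ => rfl
  have he2 : ∀ w, e (.inr w) = w.1 := fun _ => rfl
  have he1' : ∀ i, (e' (.inl i)).1 = vtx 0 := fun _ => rfl
  have he2' : ∀ w, (e' (.inr w)).1 = w.1 := fun _ => rfl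
  have hadj : ∀ x y, G'.adj x y = G.adj x.1 y.1 := fun x y => by rw [hadj']; rfl
  rw [WMG.bracket_eq_sum d G e (Matrix.of fun w w' => G.adj w.1 w'.1)
      (fun w => G.adj (vtx 0) w.1) (Finset.univ.filter fun w => w.1 ∈ G.marked)
      (fun i j => by
        by_cases h : i = j
        · rw [h]; exact hloop j
        · exact hnonadj i j h)
      (fun i w => htwin i 0 w.1 (hWrange w)) (fun _ _ => rfl) hunmarked
      (fun w => by simp [he2]),
    WMG.bracket_eq_sum d G' e' (Matrix.of fun w w' => G.adj w.1 w'.1)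
      (fun w => G.adj (vtx 0) w.1) (Finset.univ.filter fun w => w.1 ∈ G.marked)
      (fun i j => by rw [hadj]; exact hloop 0)
      (fun i w => by rw [hadj]; rfl) (fun w w' => by rw [hadj]; rfl)
      (fun i => by rw [hmarked']; exact hunmarked 0)
      (fun w => by rw [hmarked', he2']; simp), hphi']
  congr 1
  refine Finset.sum_congr rfl fun Q _ => ?_
  rw [WMG.sum_weights (by simpa using hodd), WMG.sum_weights (by simp)]
  have hA : ∀ w, G'.alpha (e' (.inr w)) = G.alpha (e (.inr w)) := fun w => by
    rw [halpha', he2', if_neg (hWne w 0)]; rfl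
  have hB : ∀ w, G'.beta (e' (.inr w)) = G.beta (e (.inr w)) := fun w => by
    rw [hbeta', he2', if_neg (hWne w 0)]; rfl
  have hA0 : G'.alpha (e' (.inl ())) = (↑d⁻¹ : R) * (-(∏ i, G.beta (vtx i)) +
      ∏ i, (G.alpha (vtx i) * (d : R) + G.beta (vtx i))) := by
    rw [halpha', if_pos (he1' ())]
  have hB0 : G'.beta (e' (.inl ())) = ∏ i, G.beta (vtx i) := by
    rw [hbeta', if_pos (he1' ())]
  -- For a single twin, the formula of `sum_weights` gives back the weight of that twin.
  have hA1 : (↑d⁻¹ : R) * (-G'.beta (e' (.inl ())) +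
      (G'.alpha (e' (.inl ())) * (d : R) + G'.beta (e' (.inl ())))) =
      G'.alpha (e' (.inl ())) := by
    rw [add_comm _ (G'.beta _), neg_add_cancel_left, mul_comm, mul_assoc, Units.mul_inv, mul_one]
  simp only [Finset.univ_unique, Finset.prod_singleton, PUnit.default_eq_unit, hA, hB, he1]
  rw [hA1, hA0, hB0]
end

section
/- Let F be a weighted marked graph over R with an unlooped, unmarked vertex a. Then there exist elements α'(a), β'(a), α'(a_m) of R, depending only on F and a, with the following universal property: for every weighted marked graph H with V(F) ∩ V(H) = {a}, with a unlooped and unmarked in H, and such that no neighbor of a in H is marked, the composition F ∗ H satisfies [F ∗ H] = [H'] + [H'_m], where H' is obtained from H by changing the weights of a to α'(a) and β'(a), and H'_m is obtained from H by marking a and changing its weights to α'(a_m) and 0. -/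
/-! ### Nullities of joined and bordered matrices -/

open Matrix in
/-- For a symmetric matrix `M`, the column space is the orthogonal complement of the kernel. -/
theorem Matrix.exists_mulVec_eq_of_ker {K m : Type*} [Field K] [Fintype m] [DecidableEq m]
    {M : Matrix m m K} (hM : M.IsSymm) (ρ : m → K)
    (h : ∀ z, M *ᵥ z = 0 → ρ ⬝ᵥ z = 0) : ∃ w, M *ᵥ w = ρ := by
  have hmem : dotProductBilin K K ρ ∈ (LinearMap.ker M.mulVecLin).dualAnnihilator := by
    rw [Submodule.mem_dualAnnihilator]
    intro z hz
    exact h z (by simpa using hz)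
  rw [← LinearMap.range_dualMap_eq_dualAnnihilator_ker] at hmem
  obtain ⟨f, hf⟩ := hmem
  refine ⟨fun i => f (Pi.single i 1), ?_⟩
  have hfw : ∀ v, f v = (fun i => f (Pi.single i 1)) ⬝ᵥ v := by
    intro v
    conv_lhs => rw [pi_eq_sum_univ' v]
    simp [dotProduct, map_sum, mul_comm]
  ext j
  have := LinearMap.congr_fun hf (Pi.single j 1)
  simp only [LinearMap.dualMap_apply, Matrix.mulVecLin_apply] at this
  rw [hfw, dotProduct_mulVec, dotProduct_single_one, ← mulVec_transpose, hM.eq] at this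
  rw [this]
  simp

namespace WMG

open Matrix

variable {K m n : Type*} [Field K] [Fintype m] [Fintype n] 

/-- The nullity of a square matrix, as the dimension of its kernel. -/
noncomputable def nul (M : Matrix n n K) : ℕ := Module.finrank K (LinearMap.ker M.mulVecLin)

omit [Fintype m] in
theorem rank_add_nul [DecidableEq n] (M : Matrix n n K) : M.rank + nul M = Fintype.card n := by
  have := M.mulVecLin.finrank_range_add_finrank_ker
  rwa [Module.finrank_fintype_fun_eq_card] at this

/-- The block matrix `[M, ρ κᵀ; κ ρᵀ, N]`, the shape of the adjacency matrix of a composition. -/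
abbrev joinMatrix (M : Matrix m m K) (ρ : m → K) (N : Matrix n n K) (κ : n → K) :
    Matrix (m ⊕ n) (m ⊕ n) K :=
  fromBlocks M (vecMulVec ρ κ) (vecMulVec κ ρ) N

/-- The matrix `N` bordered by `κ` with corner entry `c`. It is the join of `N` with the
one-by-one matrix `c`, so that facts about `joinMatrix` apply to it. -/
abbrev bordMatrix (c : K) (N : Matrix n n K) (κ : n → K) : Matrix (Unit ⊕ n) (Unit ⊕ n) K :=
  joinMatrix (of fun _ _ => c) (fun _ => 1) N κ

theorem mem_ker_joinMatrix {M : Matrix m m K} {ρ : m → K} {N : Matrix n n K} {κ : n → K}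
    {u : m ⊕ n → K} : u ∈ LinearMap.ker (joinMatrix M ρ N κ).mulVecLin ↔
      M *ᵥ (u ∘ Sum.inl) + (κ ⬝ᵥ (u ∘ Sum.inr)) • ρ = 0 ∧
      (ρ ⬝ᵥ (u ∘ Sum.inl)) • κ + N *ᵥ (u ∘ Sum.inr) = 0 := by
  rw [LinearMap.mem_ker, mulVecLin_apply, fromBlocks_mulVec, vecMulVec_mulVec, vecMulVec_mulVec]
  simp only [op_smul_eq_smul]
  rw [← Sum.elim_zero_zero, Sum.elim_eq_iff]

/-- When `ρ = M w`, the substitution `(x, y) ↦ (x + (κ · y) w, y)` turns the kernel of the join into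
a product of kernels. -/
theorem nul_joinMatrix_of_mulVec_eq {M : Matrix m m K} (hM : M.IsSymm) {ρ w : m → K}
    (hw : M *ᵥ w = ρ) (N : Matrix n n K) (κ : n → K) :
    nul (joinMatrix M ρ N κ) = nul M + nul (N - (w ⬝ᵥ ρ) • vecMulVec κ κ) := by
  have hρ : ∀ x, ρ ⬝ᵥ x = w ⬝ᵥ (M *ᵥ x) := by
    intro x
    rw [dotProduct_mulVec, ← mulVec_transpose, hM.eq, hw]
  unfold nul
  rw [← Module.finrank_prod]
  refine LinearEquiv.finrank_eq
    { toFun := fun u => (⟨u.1 ∘ Sum.inl + (κ ⬝ᵥ (u.1 ∘ Sum.inr)) • w, ?_⟩,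
        ⟨u.1 ∘ Sum.inr, ?_⟩)
      invFun := fun v => ⟨Sum.elim (v.1.1 - (κ ⬝ᵥ v.2.1) • w) v.2.1, ?_⟩
      map_add' := ?_
      map_smul' := ?_
      left_inv := ?_
      right_inv := ?_ }
  · obtain ⟨h1, h2⟩ := mem_ker_joinMatrix.1 u.2
    rw [LinearMap.mem_ker, mulVecLin_apply, mulVec_add, mulVec_smul, hw, h1]
  · obtain ⟨h1, h2⟩ := mem_ker_joinMatrix.1 u.2
    rw [LinearMap.mem_ker, mulVecLin_apply, sub_mulVec, smul_mulVec, vecMulVec_mulVec,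
      op_smul_eq_smul]
    rw [hρ, eq_neg_of_add_eq_zero_left h1] at h2
    rw [← h2, dotProduct_neg, dotProduct_smul, smul_smul, smul_eq_mul, neg_smul, mul_comm]
    abel
  · intro u v
    ext i <;> simp [dotProduct_add, Pi.add_comp]; ring
  · intro c u
    ext i <;> simp [Pi.smul_comp, mul_assoc]
  · have h1 := v.1.2
    have h2 := v.2.2
    rw [LinearMap.mem_ker, mulVecLin_apply] at h1 h2
    rw [sub_mulVec, smul_mulVec, vecMulVec_mulVec, op_smul_eq_smul] at h2
    refine mem_ker_joinMatrix.2 ⟨?_, ?_⟩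
    · simp [mulVec_sub, mulVec_smul, h1, hw]
    · rw [Sum.elim_comp_inl, Sum.elim_comp_inr, hρ, mulVec_sub, mulVec_smul, hw, h1,
        sub_eq_zero.1 h2, smul_smul]
      simp [mul_comm]
  · intro u
    ext (i | i) <;> simp
  · intro v
    ext i <;> simp

/-- When `M z = 0` and `ρ · z = 1`, pairing the first block of equations with `z` forces `κ · y = 0`
on the kernel of the join; subtracting `(ρ · x) z` from `x` then separates `x` from `(ρ · x, y)`,
which lies in the kernel of the bordered matrix. -/
theorem nul_joinMatrix_of_ker {M : Matrix m m K} (hM : M.IsSymm) {ρ z : m → K}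
    (hz : M *ᵥ z = 0) (hz1 : ρ ⬝ᵥ z = 1) (N : Matrix n n K) (κ : n → K) :
    nul (joinMatrix M ρ N κ) =
      Module.finrank K ↥(LinearMap.ker M.mulVecLin ⊓ LinearMap.ker (dotProductBilin K K ρ)) +
        nul (bordMatrix 0 N κ) := by
  unfold nul
  rw [← Module.finrank_prod]
  have key : ∀ u ∈ LinearMap.ker (joinMatrix M ρ N κ).mulVecLin, κ ⬝ᵥ (u ∘ Sum.inr) = 0 := by
    intro u hu
    have h1 := congrArg (fun x => z ⬝ᵥ x) (mem_ker_joinMatrix.1 hu).1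
    simp only [dotProduct_add, dotProduct_mulVec, dotProduct_smul, dotProduct_zero] at h1
    rw [← mulVec_transpose, hM.eq, hz, dotProduct_comm z ρ, hz1] at h1
    simpa using h1
  have h0 : ∀ t : Unit → K, (of fun _ _ => (0:K) : Matrix Unit Unit K) *ᵥ t = 0 := by
    intro t; ext; simp [mulVec, dotProduct]
  refine LinearEquiv.finrank_eq
    { toFun := fun u => (⟨u.1 ∘ Sum.inl - (ρ ⬝ᵥ (u.1 ∘ Sum.inl)) • z, ?_⟩,
        ⟨Sum.elim (fun _ => ρ ⬝ᵥ (u.1 ∘ Sum.inl)) (u.1 ∘ Sum.inr), ?_⟩)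
      invFun := fun v => ⟨Sum.elim (v.1.1 + v.2.1 (Sum.inl ()) • z) (v.2.1 ∘ Sum.inr), ?_⟩
      map_add' := ?_
      map_smul' := ?_
      left_inv := ?_
      right_inv := ?_ }
  · have hk := key _ u.2
    obtain ⟨h1, h2⟩ := mem_ker_joinMatrix.1 u.2
    rw [hk, zero_smul, add_zero] at h1
    simp [mulVec_sub, mulVec_smul, hz, h1, hz1]
  · have hk := key _ u.2
    obtain ⟨h1, h2⟩ := mem_ker_joinMatrix.1 u.2
    refine mem_ker_joinMatrix.2 ⟨?_, ?_⟩
    · rw [h0, Sum.elim_comp_inr, hk]; simp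
    · simpa [dotProduct] using h2
  · intro u v
    ext i
    · simp [dotProduct_add, Pi.add_comp]; ring
    · rcases i with i | i <;> simp [dotProduct_add, Pi.add_comp]
  · intro c u
    ext i
    · simp [Pi.smul_comp, mul_sub, mul_assoc]
    · rcases i with i | i <;> simp [Pi.smul_comp]
  · obtain ⟨hx, hx'⟩ := Submodule.mem_inf.1 v.1.2
    obtain ⟨h1, h2⟩ := mem_ker_joinMatrix.1 v.2.2
    rw [LinearMap.mem_ker] at hx hx'
    rw [mulVecLin_apply] at hx
    rw [dotProductBilin_apply_apply] at hx'
    rw [h0, zero_add] at h1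
    have hk : κ ⬝ᵥ (v.2.1 ∘ Sum.inr) = 0 := by simpa using congrFun h1 ()
    refine mem_ker_joinMatrix.2 ⟨?_, ?_⟩
    · simp [mulVec_add, mulVec_smul, hx, hz, hk]
    · rw [show (fun _ : Unit => (1 : K)) ⬝ᵥ (v.2.1 ∘ Sum.inl) = v.2.1 (Sum.inl ()) by
        simp [dotProduct]] at h2
      simpa [hx', hz1] using h2
  · intro u
    ext (i | i) <;> simp
  · intro v
    obtain ⟨hx, hx'⟩ := Submodule.mem_inf.1 v.1.2
    rw [LinearMap.mem_ker, dotProductBilin_apply_apply] at hx'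
    ext i
    · simp [hx', hz1]
    · rcases i with i | i <;> simp [hx', hz1]

theorem nul_bordMatrix_one (N : Matrix n n K) (κ : n → K) :
    nul (bordMatrix 1 N κ) = nul (N - vecMulVec κ κ) := by
  have hM : (of fun _ _ => (1 : K) : Matrix Unit Unit K) = 1 := by ext; simp
  have h := nul_joinMatrix_of_mulVec_eq (M := (of fun _ _ => (1 : K) : Matrix Unit Unit K))
    (ρ := fun _ => 1) (w := fun _ => 1) (by ext; rfl) (by rw [hM, one_mulVec]) N κ
  have h0 : nul (of fun _ _ => (1 : K) : Matrix Unit Unit K) = 0 := by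
    rw [nul, hM, mulVecLin_one, LinearMap.ker_id, finrank_bot]
  rw [h, h0]
  simp [dotProduct]
/-- The three coefficients depend only on `M` and `ρ`, that is, on the `F` side of a composition. -/
theorem exists_pow_nul_joinMatrix {R : Type*} [CommRing R] (d : R)
    {M : Matrix m m (ZMod 2)} (hM : M.IsSymm) (ρ : m → ZMod 2) :
    ∃ p q r : R, ∀ (n : Type) [Fintype n] (N : Matrix n n (ZMod 2)) (κ : n → ZMod 2),
      d ^ nul (joinMatrix M ρ N κ) =
        p * d ^ nul (bordMatrix 0 N κ) + q * d ^ nul (bordMatrix 1 N κ) + r * d ^ nul N := by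
  classical
  have h01 : ∀ x : ZMod 2, x ≠ 0 → x = 1 := by decide
  by_cases h : ∃ z, M *ᵥ z = 0 ∧ ρ ⬝ᵥ z ≠ 0
  · obtain ⟨z, hz, hz1⟩ := h
    refine ⟨d ^ Module.finrank (ZMod 2) ↥(LinearMap.ker M.mulVecLin ⊓
      LinearMap.ker (dotProductBilin (ZMod 2) (ZMod 2) ρ)), 0, 0, fun n _ N κ => ?_⟩
    rw [nul_joinMatrix_of_ker hM hz (h01 _ hz1), pow_add]
    simp
  · push Not at h
    obtain ⟨w, hw⟩ := Matrix.exists_mulVec_eq_of_ker hM ρ h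
    by_cases hs : w ⬝ᵥ ρ = 0
    · refine ⟨0, 0, d ^ nul M, fun n _ N κ => ?_⟩
      rw [nul_joinMatrix_of_mulVec_eq hM hw, hs, zero_smul, sub_zero, pow_add]
      simp
    · refine ⟨0, d ^ nul M, 0, fun n _ N κ => ?_⟩
      rw [nul_joinMatrix_of_mulVec_eq hM hw, h01 _ hs, one_smul, pow_add,
        nul_bordMatrix_one]
      simp

end WMG

/-! ### Graphs with a distinguished vertex -/

namespace WMG

open Matrix

section Graph

variable {R V : Type*} [Fintype V] [DecidableEq V]

/-- The nullity of `𝒜(G)_T` can be computed with the surviving vertices indexed by any type. -/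
theorem nullity_eq_nul (G : WMG R V) (T : Finset V) {n : Type*} [Fintype n]
    (f : n → V) (hf : Function.Injective f) (hr : ∀ x, x ∈ G.keep T ↔ ∃ i, f i = x) :
    G.nullity T = nul ((G.adjT T).submatrix f f) := by
  classical
  let e : n ≃ {x // x ∈ G.keep T} := Equiv.ofBijective (fun i => ⟨f i, (hr _).2 ⟨i, rfl⟩⟩)
    ⟨fun i j h => hf (congrArg Subtype.val h), fun x => by
      obtain ⟨i, hi⟩ := (hr _).1 x.2
      exact ⟨i, Subtype.ext hi⟩⟩
  have h := rank_add_nul ((G.adjT T).submatrix f f)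
  have h' : (G.adjT T).submatrix f f =
      ((G.adjT T).submatrix (fun i : {x // x ∈ G.keep T} => i.1)
        (fun j : {x // x ∈ G.keep T} => j.1)).submatrix e e := rfl
  rw [nullity, ← Fintype.card_congr e, ← h]
  rw [h', rank_submatrix] at h
  rw [h', rank_submatrix]
  omega

/-- The induced weighted marked graph on the vertices other than `a`. -/
def away (G : WMG R V) (a : V) : WMG R {x : V // x ≠ a} where
  adj := G.adj.submatrix Subtype.val Subtype.val
  symm := G.symm.submatrix Subtype.val
  marked := G.marked.subtype fun x => x ≠ a
  alpha := fun x => G.alpha x.1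
  beta := fun x => G.beta x.1
  phi := G.phi

/-- The vertices other than `a` that survive in `𝒜(G - a)_T`. -/
abbrev Kept (G : WMG R V) (a : V) (T : Finset {x : V // x ≠ a}) : Type _ :=
  {x : {x : V // x ≠ a} // x ∈ (G.away a).keep T}

/-- The matrix `𝒜(G - a)_T`, with the rows and columns of deleted vertices removed. -/
def core (G : WMG R V) (a : V) (T : Finset {x : V // x ≠ a}) :
    Matrix (G.Kept a T) (G.Kept a T) (ZMod 2) :=
  ((G.away a).adjT T).submatrix Subtype.val Subtype.val

/-- The vector recording which surviving vertices are adjacent to `a`. -/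
def nbr (G : WMG R V) (a : V) (T : Finset {x : V // x ≠ a}) : G.Kept a T → ZMod 2 :=
  fun x => G.adj a x.1.1

theorem core_apply (G : WMG R V) (a : V) (T : Finset {x : V // x ≠ a}) (i j : G.Kept a T) :
    G.core a T i j = G.adj i.1.1 j.1.1 + if i.1 = j.1 ∧ i.1 ∈ T then 1 else 0 := rfl

theorem core_isSymm (G : WMG R V) (a : V) (T : Finset {x : V // x ≠ a}) :
    (G.core a T).IsSymm := by
  refine IsSymm.ext fun i j => ?_
  rw [core_apply, core_apply, G.symm.apply]
  congr 1
  by_cases h : i.1 = j.1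
  · simp [h]
  · simp [h, Ne.symm h]

/-- The product of the weights attached to `T`, over all vertices other than `a`. -/
def weight [CommRing R] (G : WMG R V) (a : V) (T : Finset {x : V // x ≠ a}) : R :=
  (∏ x ∈ Tᶜ, G.alpha x.1) * ∏ x ∈ T, G.beta x.1

/-- A set of vertices other than `a`, regarded as a set of vertices. -/
abbrev up {a : V} (T : Finset {x : V // x ≠ a}) : Finset V :=
  T.map (Function.Embedding.subtype _)

omit [Fintype V] [DecidableEq V] in
theorem not_mem_up {a : V} (T : Finset {x : V // x ≠ a}) : a ∉ up T := by simp [up]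

theorem sum_finset_eq {M : Type*} [AddCommMonoid M] (a : V) (f : Finset V → M) :
    ∑ T, f T = ∑ T : Finset {x : V // x ≠ a}, (f (up T) + f (insert a (up T))) := by
  have key : ∀ g : Finset V → M, ∑ T ∈ (Finset.univ.erase a).powerset, g T =
      ∑ T : Finset {x : V // x ≠ a}, g (up T) := by
    intro g
    refine (Finset.sum_bij (fun T _ => up T) ?_ ?_ ?_ ?_).symm
    · intro T _
      rw [Finset.mem_powerset]
      intro x hx
      refine Finset.mem_erase.2 ⟨?_, Finset.mem_univ _⟩
      rintro rfl
      exact not_mem_up T hx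
    · intro T _ T' _ h
      exact Finset.map_injective _ h
    · intro T hT
      refine ⟨T.subtype _, Finset.mem_univ _, ?_⟩
      rw [up, Finset.subtype_map]
      refine Finset.filter_true_of_mem fun x hx => ?_
      exact Finset.ne_of_mem_erase (Finset.mem_powerset.1 hT hx)
    · intro T _
      rfl
  rw [← Finset.powerset_univ, ← Finset.insert_erase (Finset.mem_univ a),
    Finset.sum_powerset_insert (Finset.notMem_erase _ _), key, key, ← Finset.sum_add_distrib]

theorem compl_up {a : V} (T : Finset {x : V // x ≠ a}) : (up T)ᶜ = insert a (up Tᶜ) := by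
  ext x
  by_cases h : x = a
  · subst h; simp
  · simp [h]

theorem compl_insert_up {a : V} (T : Finset {x : V // x ≠ a}) :
    (insert a (up T))ᶜ = up Tᶜ := by
  ext x
  by_cases h : x = a
  · subst h; simp
  · simp [h]

/-- The bracket, with the two states of the vertex `a` grouped together. -/
theorem bracket_eq_sum_s3 [CommRing R] (G : WMG R V) (d : Rˣ) (a : V) :
    G.bracket d = (d : R) ^ G.phi * ∑ T : Finset {x : V // x ≠ a}, G.weight a T *
      (G.alpha a * (d : R) ^ G.nullity (up T) +
        G.beta a * (d : R) ^ G.nullity (insert a (up T))) := by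
  rw [bracket, sum_finset_eq a]
  congr 1
  refine Finset.sum_congr rfl fun T _ => ?_
  rw [compl_up, compl_insert_up, Finset.prod_insert (not_mem_up _),
    Finset.prod_insert (not_mem_up _)]
  simp only [up, Finset.prod_map, Function.Embedding.subtype_apply, weight]
  ring

theorem nullity_up (H : WMG R V) (a : V) (x y : R) (hl : H.adj a a = 0) (hm : a ∉ H.marked)
    (T : Finset {x : V // x ≠ a}) :
    (H.reweight a x y).nullity (up T) = nul (bordMatrix 0 (H.core a T) (H.nbr a T)) := by
  rw [nullity_eq_nul (n := Unit ⊕ H.Kept a T) _ _ (Sum.elim (fun _ => a) fun y => y.1.1)]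
  · congr 1
    ext (i | i) (j | j)
    · simp [adjT, reweight, hl]
    · simp [adjT, reweight, nbr, vecMulVec_apply, j.1.2.symm]
    · simp [adjT, reweight, nbr, vecMulVec_apply, i.1.2, H.symm.apply]
    · simp [adjT, reweight, core_apply, Subtype.coe_inj, i.1.2]
  · rintro (i | i) (j | j) h
    · rfl
    · exact absurd h.symm j.1.2
    · exact absurd h i.1.2
    · exact congrArg _ (Subtype.ext (Subtype.ext h))
  · intro v
    by_cases hv : v = a
    · subst hv
      simp [keep, reweight, hm]
    · simp [keep, reweight, hv, Ne.symm hv, adjT, away]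

theorem nullity_insert_up (H : WMG R V) (a : V) (x y : R) (hl : H.adj a a = 0)
    (hm : a ∉ H.marked) (T : Finset {x : V // x ≠ a}) :
    (H.reweight a x y).nullity (insert a (up T)) =
      nul (bordMatrix 1 (H.core a T) (H.nbr a T)) := by
  rw [nullity_eq_nul (n := Unit ⊕ H.Kept a T) _ _ (Sum.elim (fun _ => a) fun y => y.1.1)]
  · congr 1
    ext (i | i) (j | j)
    · simp [adjT, reweight, hl]
    · simp [adjT, reweight, nbr, vecMulVec_apply, j.1.2.symm]
    · simp [adjT, reweight, nbr, vecMulVec_apply, i.1.2, H.symm.apply]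
    · simp [adjT, reweight, core_apply, Subtype.coe_inj, i.1.2]
  · rintro (i | i) (j | j) h
    · rfl
    · exact absurd h.symm j.1.2
    · exact absurd h i.1.2
    · exact congrArg _ (Subtype.ext (Subtype.ext h))
  · intro v
    by_cases hv : v = a
    · subst hv
      simp [keep, reweight, hm]
    · simp [keep, reweight, hv, Ne.symm hv, adjT, away]

/-- A marked unlooped `a` outside the toggled set has diagonal entry `0` and is deleted. -/
theorem nullity_mark_up (H : WMG R V) (a : V) (x y : R) (hl : H.adj a a = 0)
    (T : Finset {x : V // x ≠ a}) :
    (H.markReweight a x y).nullity (up T) = nul (H.core a T) := by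
  rw [nullity_eq_nul (n := H.Kept a T) _ _ (fun y => y.1.1)]
  · congr 1
    ext i j
    simp [adjT, markReweight, core_apply, Subtype.coe_inj, i.1.2]
  · exact Subtype.val_injective.comp Subtype.val_injective
  · intro v
    by_cases hv : v = a
    · subst hv
      simp [keep, markReweight, hl, adjT]
    · simp [keep, markReweight, hv, adjT, away]

theorem weight_reweight [CommRing R] (H : WMG R V) (a : V) (x y : R)
    (T : Finset {x : V // x ≠ a}) : (H.reweight a x y).weight a T = H.weight a T :=
  congrArg₂ _ (Finset.prod_congr rfl fun v _ => Function.update_of_ne v.2 _ _)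
    (Finset.prod_congr rfl fun v _ => Function.update_of_ne v.2 _ _)

theorem weight_markReweight [CommRing R] (H : WMG R V) (a : V) (x y : R)
    (T : Finset {x : V // x ≠ a}) : (H.markReweight a x y).weight a T = H.weight a T :=
  H.weight_reweight a x y T

theorem bracket_reweight [CommRing R] (H : WMG R V) (d : Rˣ) (a : V) (x y : R)
    (hl : H.adj a a = 0) (hm : a ∉ H.marked) :
    (H.reweight a x y).bracket d = (d : R) ^ H.phi * ∑ T, H.weight a T *
      (x * (d : R) ^ nul (bordMatrix 0 (H.core a T) (H.nbr a T)) +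
        y * (d : R) ^ nul (bordMatrix 1 (H.core a T) (H.nbr a T))) := by
  rw [bracket_eq_sum_s3 _ d a]
  congr 1
  refine Finset.sum_congr rfl fun T _ => ?_
  rw [nullity_up H a x y hl hm, nullity_insert_up H a x y hl hm]
  rw [weight_reweight]
  simp [reweight]

theorem bracket_markReweight [CommRing R] (H : WMG R V) (d : Rˣ) (a : V) (x : R)
    (hl : H.adj a a = 0) :
    (H.markReweight a x 0).bracket d = (d : R) ^ H.phi * ∑ T, H.weight a T *
      (x * (d : R) ^ nul (H.core a T)) := by
  rw [bracket_eq_sum_s3 _ d a]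
  congr 1
  refine Finset.sum_congr rfl fun T _ => ?_
  rw [nullity_mark_up H a x 0 hl]
  rw [weight_markReweight]
  simp [markReweight]

/-! ### The composition -/

variable {W : Type*} [Fintype W] [DecidableEq W]

theorem nullity_comp (F : WMG R V) (H : WMG R W) (a : V) (b : W)
    (S : Finset {x : V // x ≠ a}) (T : Finset {x : W // x ≠ b}) :
    (F.comp H a b).nullity (S.disjSum T) =
      nul (joinMatrix (F.core a S) (F.nbr a S) (H.core b T) (H.nbr b T)) := by
  rw [nullity_eq_nul (n := F.Kept a S ⊕ H.Kept b T) _ _ (Sum.map Subtype.val Subtype.val)]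
  · congr 1
    ext (i | i) (j | j)
    · simp [adjT, comp, core_apply]
    · simp [adjT, comp, nbr, vecMulVec_apply, F.symm.apply]
    · simp [adjT, comp, nbr, vecMulVec_apply, F.symm.apply, mul_comm]
    · simp [adjT, comp, core_apply]
  · exact Subtype.val_injective.sumMap Subtype.val_injective
  · rintro (v | v) <;> simp only [Sum.exists, Sum.map_inl, Sum.map_inr, Sum.inl.injEq,
      Sum.inr.injEq, reduceCtorEq, exists_false, or_false, false_or, Subtype.exists,
      exists_prop, exists_eq_right] <;> simp [keep, comp, adjT, away]

theorem bracket_comp [CommRing R] (F : WMG R V) (H : WMG R W) (d : Rˣ) (a : V) (b : W) :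
    (F.comp H a b).bracket d = (d : R) ^ (F.phi + H.phi) *
      ∑ S, ∑ T, F.weight a S * H.weight b T *
        (d : R) ^ nul (joinMatrix (F.core a S) (F.nbr a S) (H.core b T) (H.nbr b T)) := by
  rw [bracket, ← Finset.sumEquiv.symm.toEquiv.sum_comp, Fintype.sum_prod_type]
  refine congrArg₂ _ rfl (Finset.sum_congr rfl fun S _ => Finset.sum_congr rfl fun T _ => ?_)
  have hc : (S.disjSum T)ᶜ = Sᶜ.disjSum Tᶜ := by
    ext (x | x) <;> simp
  change (∏ x ∈ (S.disjSum T)ᶜ, _) * (∏ x ∈ S.disjSum T, _) * _ ^ nullity _ (S.disjSum T) = _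
  rw [nullity_comp, hc, Finset.prod_disjSum, Finset.prod_disjSum]
  simp only [comp, weight, Sum.elim_inl, Sum.elim_inr]
  ring

end Graph

end WMG

theorem pjoin {R : Type*} [CommRing R] (d : Rˣ) {VF : Type} [Fintype VF] [DecidableEq VF]
    (F : WMG R VF) (a : VF) (hloop : F.adj a a = 0) (hmark : a ∉ F.marked) :
    ∃ A B Am : R, WMG.UnivProp d F a A B Am := by
  choose p q r h using fun S => WMG.exists_pow_nul_joinMatrix (d : R)
    (F.core_isSymm a S) (F.nbr a S)
  refine ⟨(d : R) ^ F.phi * ∑ S, F.weight a S * p S, (d : R) ^ F.phi * ∑ S, F.weight a S * q S,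
    (d : R) ^ F.phi * ∑ S, F.weight a S * r S, ?_⟩
  intro VH _ _ H b hl hm _
  rw [F.bracket_comp, H.bracket_reweight _ _ _ _ hl hm, H.bracket_markReweight _ _ _ hl,
    ← mul_add, ← Finset.sum_add_distrib, Finset.sum_comm, pow_add, mul_comm (_ ^ _), mul_assoc,
    Finset.mul_sum]
  refine congrArg _ (Finset.sum_congr rfl fun T _ => ?_)
  simp only [h, Finset.mul_sum, Finset.sum_mul, ← Finset.sum_add_distrib]
  refine Finset.sum_congr rfl fun S _ => ?_
  ring
end

section
/- Let F be a weighted marked graph over R with an unlooped, unmarked vertex a, and let α'(a), β'(a), α'(a_m) be elements of R having the universal property: for every weighted marked graph H with V(F) ∩ V(H) = {a}, with a unlooped and unmarked in H, and such that no neighbor of a in H is marked, one has [F ∗ H] = [H'] + [H'_m], where H' is obtained from H by changing the weights of a to α'(a) and β'(a), and H'_m is obtained from H by marking a and changing its weights to α'(a_m) and 0. Then: (2 − d − d²)·α'(a) = −(d+1)·[F − a] + [F^{10}] + [F^{01}]; (2 − d − d²)·β'(a) = [F − a] + [F^{10}] − (d+1)·[F^{01}]; and (2 − d − d²)·α'(a_m)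 = [F − a] − (d+1)·[F^{10}] + [F^{01}]. -/
namespace WMG

/-! ### Relabelling of vertices -/

theorem nullity_congr_s4 {R V W : Type*} [Fintype V] [DecidableEq V] [Fintype W] [DecidableEq W]
    (G : WMG R V) (G' : WMG R W) (e : V ≃ W)
    (hadj : ∀ i j, G'.adj (e i) (e j) = G.adj i j)
    (hm : ∀ i, e i ∈ G'.marked ↔ i ∈ G.marked) (T : Finset V) :
    G'.nullity (T.map e.toEmbedding) = G.nullity T := by
  have hT : ∀ i j, G'.adjT (T.map e.toEmbedding) (e i) (e j) = G.adjT T i j := by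
    intro i j
    simp [adjT, hadj]
  have hk : ∀ i, i ∈ G.keep T ↔ e i ∈ G'.keep (T.map e.toEmbedding) := by
    intro i
    simp only [keep, Finset.mem_filter, Finset.mem_univ, true_and, hT, hm]
  let ek : {x // x ∈ G.keep T} ≃ {x // x ∈ G'.keep (T.map e.toEmbedding)} :=
    e.subtypeEquiv hk
  unfold nullity
  rw [← Fintype.card_congr ek, ← Matrix.rank_submatrix _ ek ek]
  congr 2
  ext i j
  exact hT i.1 j.1

/-- The bracket is invariant under isomorphism of weighted marked graphs. -/
theorem bracket_congr {R V W : Type*} [CommRing R] [Fintype V] [DecidableEq V] [Fintype W]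
    [DecidableEq W] (d : Rˣ) (G : WMG R V) (G' : WMG R W) (e : V ≃ W)
    (hadj : ∀ i j, G'.adj (e i) (e j) = G.adj i j)
    (hm : ∀ i, e i ∈ G'.marked ↔ i ∈ G.marked)
    (ha : ∀ i, G'.alpha (e i) = G.alpha i) (hb : ∀ i, G'.beta (e i) = G.beta i)
    (hp : G'.phi = G.phi) : G.bracket d = G'.bracket d := by
  unfold bracket
  rw [hp]
  congr 1
  refine Fintype.sum_equiv e.finsetCongr _ _ fun T => ?_
  have hc : (T.map e.toEmbedding)ᶜ = Tᶜ.map e.toEmbedding := by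
    ext x
    simp
  simp only [Equiv.finsetCongr_apply]
  rw [nullity_congr_s4 G G' e hadj hm, hc, Finset.prod_map, Finset.prod_map]
  simp [ha, hb]

/-! ### Counting kernel vectors -/

/-- A square matrix over `GF(2)` with `2 ^ n` kernel vectors has nullity `n`. -/
theorem nullity_eq_of_card {m : Type*} [Fintype m] [DecidableEq m]
    (M : Matrix m m (ZMod 2)) (n : ℕ)
    (h : (Finset.univ.filter fun v : m → ZMod 2 => ∀ i, ∑ j, M i j * v j = 0).card = 2 ^ n) :
    Fintype.card m - M.rank = n := by
  have h1 := M.mulVecLin.finrank_range_add_finrank_ker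
  rw [Module.finrank_fintype_fun_eq_card] at h1
  have h2 : Nat.card (LinearMap.ker M.mulVecLin) =
      2 ^ Module.finrank (ZMod 2) (LinearMap.ker M.mulVecLin) := by
    rw [Module.natCard_eq_pow_finrank (K := ZMod 2), Nat.card_zmod]
  have h3 : Nat.card (LinearMap.ker M.mulVecLin) = 2 ^ n := by
    rw [← h, ← Fintype.card_subtype, ← Nat.card_eq_fintype_card]
    refine Nat.card_congr (Equiv.subtypeEquivRight fun v => ?_)
    simp [funext_iff, Matrix.mulVec, dotProduct]
  have h4 := Nat.pow_right_injective (le_refl 2) (h2.symm.trans h3)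
  unfold Matrix.rank
  omega

/-- The number of kernel vectors of `𝒜(G)_T`, for `G` with adjacency matrix `M` and set of marked
vertices `S`. No weights enter, so this is a closed term for concrete `M`, `S`, `T`. -/
def kernelCard {V : Type*} [Fintype V] [DecidableEq V] (M : Matrix V V (ZMod 2))
    (S T : Finset V) : ℕ :=
  let K : Finset V := Finset.univ.filter fun x =>
    ¬(x ∈ S ∧ (M x x + if x = x ∧ x ∈ T then 1 else 0) = 0)
  (Finset.univ.filter fun v : {x // x ∈ K} → ZMod 2 => ∀ i : {x // x ∈ K},
    ∑ j : {x // x ∈ K}, (M i.1 j.1 + if i.1 = j.1 ∧ i.1 ∈ T then 1 else 0) * v j = 0).card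

theorem nullity_eq {R V : Type*} [Fintype V] [DecidableEq V] (G : WMG R V)
    (M : Matrix V V (ZMod 2)) (S T : Finset V) (n : ℕ) (hM : G.adj = M) (hS : G.marked = S)
    (h : kernelCard M S T = 2 ^ n) : G.nullity T = n := by
  subst hM hS
  exact nullity_eq_of_card _ n h

/-! ### The test graphs and their brackets -/

/-- The single unlooped, unmarked vertex. -/
def pointGraph (R : Type*) [CommRing R] : WMG R Unit where
  adj := 0
  symm := by decide
  marked := ∅
  alpha := fun _ => 0
  beta := fun _ => 0
  phi := 0

/-- The adjacency matrix of a single edge. -/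
def edgeAdj : Matrix Bool Bool (ZMod 2) := Matrix.of fun i j => if i = j then 0 else 1

/-- The single edge joining `false` (the shared vertex `a`) to `true`, both unlooped and
unmarked, with weights `x`, `y`; those at `false` are irrelevant. -/
def edgeGraph {R : Type*} (x y : R) : WMG R Bool where
  adj := edgeAdj
  symm := by decide
  marked := ∅
  alpha := fun _ => x
  beta := fun _ => y
  phi := 0

theorem univ_finset_unit : (Finset.univ : Finset (Finset Unit)) = {∅, {()}} := by decide

theorem univ_finset_bool :
    (Finset.univ : Finset (Finset Bool)) = {∅, {false}, {true}, {false, true}} := by decide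

theorem bracket_point {R : Type*} [CommRing R] (d : Rˣ) (A B : R) :
    ((pointGraph R).reweight () A B).bracket d = d * A + B := by
  unfold bracket
  have c : ({()} : Finset Unit)ᶜ = ∅ := by decide
  rw [univ_finset_unit, Finset.sum_pair (by decide), c,
    nullity_eq _ 0 ∅ ∅ 1 rfl rfl (by decide), nullity_eq _ 0 ∅ {()} 0 rfl rfl (by decide)]
  simp [pointGraph, reweight, mul_comm]

theorem bracket_point_mark {R : Type*} [CommRing R] (d : Rˣ) (A : R) :
    ((pointGraph R).markReweight () A 0).bracket d = A := by
  unfold bracket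
  rw [univ_finset_unit, Finset.sum_pair (by decide), nullity_eq _ 0 {()} ∅ 0 rfl rfl (by decide)]
  simp [pointGraph, markReweight]

theorem sum_finset_bool {R : Type*} [CommRing R] (f : Finset Bool → R) :
    ∑ T, f T = f ∅ + f {false} + f {true} + f {false, true} := by
  rw [univ_finset_bool, Finset.sum_insert (by decide), Finset.sum_insert (by decide),
    Finset.sum_pair (by decide)]
  ring

theorem bracket_edge {R : Type*} [CommRing R] (d : Rˣ) (x y A B : R) :
    ((edgeGraph x y).reweight false A B).bracket d = x * (A + B) + y * (A + d * B) := by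
  unfold bracket
  have c1 : (∅ : Finset Bool)ᶜ = {false, true} := by decide
  have c2 : ({false} : Finset Bool)ᶜ = {true} := by decide
  have c3 : ({true} : Finset Bool)ᶜ = {false} := by decide
  have c4 : ({false, true} : Finset Bool)ᶜ = ∅ := by decide
  rw [sum_finset_bool, nullity_eq _ edgeAdj ∅ ∅ 0 rfl rfl (by decide),
    nullity_eq _ edgeAdj ∅ {false} 0 rfl rfl (by decide), nullity_eq _ edgeAdj ∅ {true} 0 rfl rfl (by decide),
    nullity_eq _ edgeAdj ∅ {false, true} 1 rfl rfl (by decide), c1, c2, c3, c4]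
  simp [edgeGraph, reweight]
  ring

theorem bracket_edge_mark {R : Type*} [CommRing R] (d : Rˣ) (x y A : R) :
    ((edgeGraph x y).markReweight false A 0).bracket d = x * (d * A) + y * A := by
  unfold bracket
  have c1 : (∅ : Finset Bool)ᶜ = {false, true} := by decide
  have c3 : ({true} : Finset Bool)ᶜ = {false} := by decide
  rw [sum_finset_bool, nullity_eq _ edgeAdj {false} ∅ 1 rfl rfl (by decide),
    nullity_eq _ edgeAdj {false} {true} 0 rfl rfl (by decide), c1, c3]
  simp [edgeGraph, markReweight]
  ring

/-! ### Compositions with the test graphs -/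

/-- Composing with a single vertex deletes `a`. -/
theorem bracket_comp_point {R : Type*} [CommRing R] (d : Rˣ) {VF : Type*} [Fintype VF]
    [DecidableEq VF] (F : WMG R VF) (a : VF) :
    (F.comp (pointGraph R) a ()).bracket d = (F.delete {a}).bracket d := by
  have : IsEmpty {y : Unit // y ≠ ()} := ⟨fun y => y.2 rfl⟩
  refine bracket_congr d _ _
    ((Equiv.sumEmpty _ _).trans (Equiv.subtypeEquivRight (by simp))) ?_ ?_ ?_ ?_ rfl
  · rintro (i | i) (j | j)
    · rfl
    all_goals exact (this.false ‹_›).elim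
  all_goals
    rintro (i | i)
    · simp [comp, delete]
    · exact (this.false i).elim

/-- Composing with an edge `ab` replaces `a` by `b`, with the weights of `b`. -/
theorem bracket_comp_edge {R : Type*} [CommRing R] (d : Rˣ) {VF : Type*} [Fintype VF]
    [DecidableEq VF] (F : WMG R VF) (a : VF) (hloop : F.adj a a = 0) (hmark : a ∉ F.marked)
    (x y : R) :
    (F.comp (edgeGraph x y) a false).bracket d = (F.reweight a x y).bracket d := by
  let f : {x : VF // x ≠ a} ⊕ {y : Bool // y ≠ false} → VF :=
    Sum.elim Subtype.val fun _ => a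
  have hf : Function.Bijective f := by
    constructor
    · rintro (⟨i, hi⟩ | ⟨i, hi⟩) (⟨j, hj⟩ | ⟨j, hj⟩) h
      · simpa [f] using h
      · exact (hi h).elim
      · exact (hj h.symm).elim
      · simp_all
    · intro v
      by_cases h : v = a
      · exact ⟨Sum.inr ⟨true, by decide⟩, h.symm⟩
      · exact ⟨Sum.inl ⟨v, h⟩, rfl⟩
  refine bracket_congr d _ _ (Equiv.ofBijective f hf) ?_ ?_ ?_ ?_ rfl
  · rintro (⟨i, hi⟩ | ⟨i, hi⟩) (⟨j, hj⟩ | ⟨j, hj⟩)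
    · rfl
    · obtain rfl : j = true := by simpa using hj
      simp_all [f, comp, reweight, edgeGraph, edgeAdj]
    · have := F.symm.apply a j
      obtain rfl : i = true := by simpa using hi
      simp_all [f, comp, reweight, edgeGraph, edgeAdj]
    · obtain rfl : i = true := by simpa using hi
      obtain rfl : j = true := by simpa using hj
      simp_all [f, comp, reweight, edgeGraph, edgeAdj]
  all_goals
    rintro (⟨i, hi⟩ | ⟨i, hi⟩)
    all_goals simp [f, comp, reweight, edgeGraph, hmark, hi]

end WMG

theorem pjoin_weights {R : Type*} [CommRing R] (d : Rˣ) {VF : Type} [Fintype VF] [DecidableEq VF]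
    (F : WMG R VF) (a : VF) (hloop : F.adj a a = 0) (hmark : a ∉ F.marked)
    (A B Am : R) (hU : WMG.UnivProp d F a A B Am) :
    (2 - (d : R) - (d : R) ^ 2) * A =
        -((d : R) + 1) * (F.delete {a}).bracket d +
          (F.reweight a 1 0).bracket d + (F.reweight a 0 1).bracket d ∧
    (2 - (d : R) - (d : R) ^ 2) * B =
        (F.delete {a}).bracket d + (F.reweight a 1 0).bracket d -
          ((d : R) + 1) * (F.reweight a 0 1).bracket d ∧
    (2 - (d : R) - (d : R) ^ 2) * Am =
        (F.delete {a}).bracket d - ((d : R) + 1) * (F.reweight a 1 0).bracket d +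
          (F.reweight a 0 1).bracket d := by
  have h0 := hU Unit (WMG.pointGraph R) () rfl (by simp [WMG.pointGraph])
    (by simp [WMG.pointGraph])
  have h1 := hU Bool (WMG.edgeGraph 1 0) false rfl (by simp [WMG.edgeGraph])
    (by simp [WMG.edgeGraph])
  have h2 := hU Bool (WMG.edgeGraph 0 1) false rfl (by simp [WMG.edgeGraph])
    (by simp [WMG.edgeGraph])
  rw [WMG.bracket_comp_point, WMG.bracket_point, WMG.bracket_point_mark] at h0
  rw [WMG.bracket_comp_edge d F a hloop hmark, WMG.bracket_edge, WMG.bracket_edge_mark] at h1 h2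
  rw [h0, h1, h2]
  refine ⟨?_, ?_, ?_⟩ <;> ring
end
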